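/- Assume F satisfies Assumption F, that μ and σ are bounded, Lipschitz in x uniformly in t and (1/2)-Hölder continuous in t uniformly in x, σ is invertible with bounded inverse, and that g : ℝ^d → ℝ is bounded and Lipschitz. Then the discrete-time approximations are (1/2)-Hölder continuous in time uniformly in h: there exists a constant C > 0, independent of n, such that |v^h(t_i, x) − v^h(t_j, x)| ≤ C·(t_j − t_i)^{1/2} for all grid times t_i ≤ t_j and all x ∈ ℝ^d. -/

import Mathlib

open MeasureTheory ProbabilityTheory Matrix Real Set Function

noncomputable section

attribute [local instance] Matrix.normedAddCommGroup Matrix.normedSpace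

abbrev Vec (d : ℕ) := Fin d → ℝ
abbrev Mat (d : ℕ) := Matrix (Fin d) (Fin d) ℝ

/-- Law of the Gaussian vector `W_h` in `ℝ^d`, centered with covariance `h · I_d`. -/
def gaussVec (d : ℕ) (h : ℝ) : Measure (Vec d) :=
  Measure.pi fun _ => gaussianReal 0 h.toNNReal

/-- One step Euler scheme `X̂_h^{t,x} = x + μ(t,x) h + σ(t,x) W_h`. -/
def euler {d : ℕ} (μ : ℝ → Vec d → Vec d) (σ : ℝ → Vec d → Mat d)
    (h t : ℝ) (x w : Vec d) : Vec d :=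
  x + h • μ t x + (σ t x).mulVec w

/-- Weight `H_1^h(t,x) = (σ(t,x)ᵀ)⁻¹ W_h / h`. -/
def H1w {d : ℕ} (σ : ℝ → Vec d → Mat d) (h t : ℝ) (x w : Vec d) : Vec d :=
  (1 / h) • ((σ t x)ᵀ⁻¹.mulVec w)

/-- Weight `H_2^h(t,x) = (σ(t,x)ᵀ)⁻¹ (W_h W_hᵀ − h I_d) σ(t,x)⁻¹ / h²`. -/
def H2w {d : ℕ} (σ : ℝ → Vec d → Mat d) (h t : ℝ) (x w : Vec d) : Mat d :=
  (1 / h ^ 2) • ((σ t x)ᵀ⁻¹ * (vecMulVec w w - h • (1 : Mat d)) * (σ t x)⁻¹)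

/-- One-step operator acting on the next-time function `ψ`. -/
def step {d : ℕ} (F : ℝ → Vec d → ℝ → Vec d → Mat d → ℝ)
    (μ : ℝ → Vec d → Vec d) (σ : ℝ → Vec d → Mat d)
    (h t : ℝ) (ψ : Vec d → ℝ) (x : Vec d) : ℝ :=
  (∫ w, ψ (euler μ σ h t x w) ∂gaussVec d h)
    + h * F t x (∫ w, ψ (euler μ σ h t x w) ∂gaussVec d h)
        (fun i => ∫ w, ψ (euler μ σ h t x w) * H1w σ h t x w i ∂gaussVec d h)
        (Matrix.of fun i j => ∫ w, ψ (euler μ σ h t x w) * H2w σ h t x w i j ∂gaussVec d h)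

/-- The operator `T_h[ψ](t,x)`. -/
def Th {d : ℕ} (F : ℝ → Vec d → ℝ → Vec d → Mat d → ℝ)
    (μ : ℝ → Vec d → Vec d) (σ : ℝ → Vec d → Mat d)
    (ψ : ℝ → Vec d → ℝ) (h t : ℝ) (x : Vec d) : ℝ :=
  step F μ σ h t (ψ (t + h)) x

/-- Assumption F of the paper, with explicit partial derivatives `Fr, Fp, Fγ` of `F`
in the variables `(r,p,γ)`. -/
structure AssumptionF (d : ℕ) (σ : ℝ → Vec d → Mat d)
    (F : ℝ → Vec d → ℝ → Vec d → Mat d → ℝ)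
    (Fr : ℝ → Vec d → ℝ → Vec d → Mat d → ℝ)
    (Fp : ℝ → Vec d → ℝ → Vec d → Mat d → Vec d)
    (Fγ : ℝ → Vec d → ℝ → Vec d → Mat d → Mat d) : Prop where
  lipschitz : ∃ L : ℝ, 0 ≤ L ∧ ∀ t x x' r r' p p' γ γ',
    |F t x r p γ - F t x' r' p' γ'| ≤ L * (‖x - x'‖ + |r - r'| + ‖p - p'‖ + ‖γ - γ'‖)
  bound_at_zero : ∃ C : ℝ, ∀ t x, |F t x 0 0 0| ≤ C
  differentiable : ∀ t x r p γ, DifferentiableAt ℝ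
    (fun q : ℝ × Vec d × Mat d => F t x q.1 q.2.1 q.2.2) (r, p, γ)
  deriv_eq : ∀ t x r p γ (dq : ℝ × Vec d × Mat d),
    fderiv ℝ (fun q : ℝ × Vec d × Mat d => F t x q.1 q.2.1 q.2.2) (r, p, γ) dq
      = Fr t x r p γ * dq.1 + Fp t x r p γ ⬝ᵥ dq.2.1
        + ∑ i, ∑ j, Fγ t x r p γ i j * dq.2.2 i j
  psd : ∀ t x r p γ, (Fγ t x r p γ).PosSemidef
  trace_le_one : ∀ t x r p γ, ((σ t x * (σ t x)ᵀ)⁻¹ * Fγ t x r p γ).trace ≤ 1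
  lower_bound : ∃ K : ℝ, 0 ≤ K ∧ ∀ t x r p γ (w : Vec d),
    Fp t x r p γ ⬝ᵥ w + w ⬝ᵥ (Fγ t x r p γ).mulVec w ≥ -K

/-- The backward scheme: `schemeAux … k` is the approximation with `k` time steps
remaining before the horizon `T` (so it corresponds to time `T − k·(T/n)`). -/
def schemeAux {d : ℕ} (T : ℝ) (F : ℝ → Vec d → ℝ → Vec d → Mat d → ℝ)
    (μ : ℝ → Vec d → Vec d) (σ : ℝ → Vec d → Mat d) (g : Vec d → ℝ) (n : ℕ) :
    ℕ → Vec d → ℝ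
  | 0 => g
  | (k + 1) => step F μ σ (T / n) (T - (k + 1) * (T / n)) (schemeAux T F μ σ g n k)

/-- The discrete time approximation `v^h(t_i, ·)` with `h = T/n` and `t_i = i·T/n`:
`v^h(t_n,·) = g` and `v^h(t_i,·) = T_h[v^h](t_i,·)`. -/
def vh {d : ℕ} (T : ℝ) (F : ℝ → Vec d → ℝ → Vec d → Mat d → ℝ)
    (μ : ℝ → Vec d → Vec d) (σ : ℝ → Vec d → Mat d) (g : Vec d → ℝ) (n i : ℕ) :
    Vec d → ℝ :=
  schemeAux T F μ σ g n (n - i)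

/-!
By the mean value theorem applied to `F`, the difference of two one-step operators is a linearised
step: an expectation of the test function against a quadratic polynomial in the Gaussian increment.
The assumptions on `F` make this weight bounded below by `-O(h)` and of mass `1 + O(h)`.

For the Lipschitz bound one moves the linearised step along the affine path joining the two Euler
schemes started from `x` and `y`. Integration by parts turns the derivative of the weight into a
derivative of the test function `φ`, so that the derivative along the path is `∫ Dφ · V` for a
random vector field `V`. Up to `O(√h)`, `V` is a nonnegative multiple of `x - y`, so that `|V|`
exceeds the component of `V` along `x - y` only by `O(h)`, and that component has mean at most
`(1 + O(h)) |x - y|`: no error of order `√h` survives. Lipschitz constants thus grow by a factor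
`1 + C h` per step, first for smooth functions and then, after mollification, for all bounded
Lipschitz functions.

A function which is `L`-Lipschitz stays within the quadratic barrier
`L ε / 2 + L |y - x|² / (2 ε)` of its value at `x`. The linearised step preserves such barriers up
to a factor `1 + C h` and an error `C h L / ε`, so that after time `τ` the oscillation is of order
`ε + τ / ε`, and `ε = √τ` gives the result.
-/

/-! ### Euclidean norms -/

/-- The Euclidean norm of a vector; the ambient norm on `Vec d` is the sup norm. -/
def l2Norm {d : ℕ} (v : Vec d) : ℝ := ‖WithLp.toLp 2 v‖

/-- The operator norm of a matrix for the Euclidean norm; the ambient norm on `Mat d` is the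
entrywise sup norm. -/
def l2OpNorm {d : ℕ} (A : Mat d) : ℝ := ‖Matrix.toEuclideanCLM (𝕜 := ℝ) A‖

section Norms

variable {d : ℕ}

lemma l2Norm_nonneg (v : Vec d) : 0 ≤ l2Norm v := norm_nonneg _

lemma l2OpNorm_nonneg (A : Mat d) : 0 ≤ l2OpNorm A := norm_nonneg _

@[simp] lemma l2Norm_zero : l2Norm (0 : Vec d) = 0 := by simp [l2Norm]

lemma l2Norm_add_le (u v : Vec d) : l2Norm (u + v) ≤ l2Norm u + l2Norm v := by
  simpa only [l2Norm, WithLp.toLp_add] using norm_add_le _ _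

lemma l2Norm_sub_le (u v : Vec d) : l2Norm (u - v) ≤ l2Norm u + l2Norm v := by
  simpa only [l2Norm, WithLp.toLp_sub] using norm_sub_le _ _

lemma l2Norm_sub_rev (u v : Vec d) : l2Norm (u - v) = l2Norm (v - u) := by
  simpa only [l2Norm, WithLp.toLp_sub] using norm_sub_rev _ _

@[simp] lemma l2Norm_smul (c : ℝ) (v : Vec d) : l2Norm (c • v) = |c| * l2Norm v := by
  simpa only [l2Norm, WithLp.toLp_smul, Real.norm_eq_abs] using norm_smul c (WithLp.toLp 2 v)

lemma l2Norm_eq_zero {v : Vec d} : l2Norm v = 0 ↔ v = 0 := by simp [l2Norm]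

lemma l2Norm_sq (v : Vec d) : l2Norm v ^ 2 = v ⬝ᵥ v := by
  rw [l2Norm, EuclideanSpace.norm_sq_eq]
  simp [dotProduct, sq]

lemma abs_dotProduct_le (u v : Vec d) : |u ⬝ᵥ v| ≤ l2Norm u * l2Norm v := by
  simpa [l2Norm, EuclideanSpace.inner_toLp_toLp, mul_comm] using
    abs_real_inner_le_norm (WithLp.toLp 2 v) (WithLp.toLp 2 u)

lemma norm_le_l2Norm (v : Vec d) : ‖v‖ ≤ l2Norm v :=
  (pi_norm_le_iff_of_nonneg (l2Norm_nonneg v)).2 fun i => PiLp.norm_apply_le (WithLp.toLp 2 v) i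

lemma l2Norm_le (v : Vec d) : l2Norm v ≤ (d + 1) * ‖v‖ := by
  refine le_of_sq_le_sq ?_ (by positivity)
  rw [l2Norm_sq]
  calc v ⬝ᵥ v ≤ ∑ _i : Fin d, ‖v‖ ^ 2 := Finset.sum_le_sum fun i _ => by
        rw [← sq, ← sq_abs]
        gcongr
        exact norm_le_pi_norm v i
    _ = d * ‖v‖ ^ 2 := by simp
    _ ≤ ((d + 1) * ‖v‖) ^ 2 := by rw [mul_pow]; gcongr; nlinarith [d.cast_nonneg (α := ℝ)]

lemma continuous_l2Norm : Continuous (l2Norm : Vec d → ℝ) :=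
  continuous_norm.comp (PiLp.continuous_toLp 2 _)

lemma l2Norm_mulVec_le (A : Mat d) (v : Vec d) : l2Norm (A *ᵥ v) ≤ l2OpNorm A * l2Norm v :=
  (Matrix.toEuclideanCLM (𝕜 := ℝ) A).le_opNorm (WithLp.toLp 2 v)

lemma l2OpNorm_le_of_forall {A : Mat d} {C : ℝ} (hC : 0 ≤ C)
    (h : ∀ v, l2Norm (A *ᵥ v) ≤ C * l2Norm v) : l2OpNorm A ≤ C :=
  ContinuousLinearMap.opNorm_le_bound _ hC fun v => h v.ofLp

@[simp] lemma l2OpNorm_smul (c : ℝ) (A : Mat d) : l2OpNorm (c • A) = |c| * l2OpNorm A := by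
  simpa only [l2OpNorm, map_smul, Real.norm_eq_abs] using
    norm_smul c (Matrix.toEuclideanCLM (𝕜 := ℝ) A)

lemma l2OpNorm_mul_le (A B : Mat d) : l2OpNorm (A * B) ≤ l2OpNorm A * l2OpNorm B := by
  simpa only [l2OpNorm, map_mul] using norm_mul_le _ _

lemma l2OpNorm_transpose (A : Mat d) : l2OpNorm Aᵀ = l2OpNorm A := by
  rw [l2OpNorm, ← conjTranspose_eq_transpose_of_trivial, ← star_eq_conjTranspose, map_star]
  exact LinearIsometryEquiv.norm_map ContinuousLinearMap.adjoint _

lemma l2OpNorm_le (A : Mat d) : l2OpNorm A ≤ (d + 1) ^ 2 * ‖A‖ := by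
  refine l2OpNorm_le_of_forall (by positivity) fun v => ?_
  have h : ‖A *ᵥ v‖ ≤ (d + 1) * (‖A‖ * l2Norm v) := by
    refine (pi_norm_le_iff_of_nonneg (by have := l2Norm_nonneg v; positivity)).2 fun i => ?_
    calc |A i ⬝ᵥ v| ≤ l2Norm (A i) * l2Norm v := abs_dotProduct_le _ _
      _ ≤ ((d + 1) * ‖A‖) * l2Norm v := by
        gcongr
        · exact l2Norm_nonneg v
        · exact (l2Norm_le _).trans (by gcongr; exact norm_le_pi_norm A i)
      _ = _ := by ring
  calc l2Norm (A *ᵥ v) ≤ (d + 1) * ((d + 1) * (‖A‖ * l2Norm v)) :=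
        (l2Norm_le _).trans (by gcongr)
    _ = _ := by ring

end Norms

/-! ### Polynomially growing families and the Gaussian measure -/

/-- The functions `f a`, `a : α`, are continuous and grow at most polynomially, uniformly in `a`. -/
structure PolyGrowth {α : Type*} {d : ℕ} (f : α → Vec d → ℝ) : Prop where
  continuous : ∀ a, Continuous (f a)
  bound : ∃ C ≥ 0, ∃ k : ℕ, ∀ a z, |f a z| ≤ C * (1 + ‖z‖) ^ k

namespace PolyGrowth

variable {α : Type*} {d : ℕ} {f g : α → Vec d → ℝ}

lemma of_bounded (hf : ∀ a, Continuous (f a)) {C : ℝ} (hC : ∀ a z, |f a z| ≤ C) :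
    PolyGrowth f :=
  ⟨hf, |C|, abs_nonneg C, 0, fun a z => by simpa using (hC a z).trans (le_abs_self C)⟩

lemma const (c : ℝ) : PolyGrowth fun (_ : α) (_ : Vec d) => c :=
  of_bounded (fun _ => continuous_const) fun _ _ => le_rfl

lemma coord (i : Fin d) : PolyGrowth fun (_ : α) (z : Vec d) => z i :=
  ⟨fun _ => continuous_apply i, 1, zero_le_one, 1, fun _ z => by
    simpa using (norm_le_pi_norm z i).trans (by simp)⟩

lemma add (hf : PolyGrowth f) (hg : PolyGrowth g) : PolyGrowth fun a z => f a z + g a z := by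
  obtain ⟨C, hC, k, hk⟩ := hf.bound
  obtain ⟨D, hD, l, hl⟩ := hg.bound
  refine ⟨fun a => (hf.continuous a).add (hg.continuous a), C + D, by positivity, k + l,
    fun a z => ?_⟩
  have hz : 1 ≤ 1 + ‖z‖ := by simp
  calc |f a z + g a z| ≤ C * (1 + ‖z‖) ^ k + D * (1 + ‖z‖) ^ l :=
        (abs_add_le _ _).trans (add_le_add (hk a z) (hl a z))
    _ ≤ C * (1 + ‖z‖) ^ (k + l) + D * (1 + ‖z‖) ^ (k + l) := by gcongr <;> first | exact hz | simp
    _ = _ := by ring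

lemma mul (hf : PolyGrowth f) (hg : PolyGrowth g) : PolyGrowth fun a z => f a z * g a z := by
  obtain ⟨C, hC, k, hk⟩ := hf.bound
  obtain ⟨D, hD, l, hl⟩ := hg.bound
  refine ⟨fun a => (hf.continuous a).mul (hg.continuous a), C * D, by positivity, k + l,
    fun a z => ?_⟩
  calc |f a z * g a z| ≤ (C * (1 + ‖z‖) ^ k) * (D * (1 + ‖z‖) ^ l) := by
        rw [abs_mul]
        gcongr
        exacts [hk a z, hl a z]
    _ = _ := by ring

lemma neg (hf : PolyGrowth f) : PolyGrowth fun a z => -f a z := by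
  simpa using (const (-1)).mul hf

lemma sub (hf : PolyGrowth f) (hg : PolyGrowth g) : PolyGrowth fun a z => f a z - g a z := by
  simpa only [sub_eq_add_neg] using hf.add hg.neg

lemma sum {ι : Type*} {s : Finset ι} {f : ι → α → Vec d → ℝ} (hf : ∀ i, PolyGrowth (f i)) :
    PolyGrowth fun a z => ∑ i ∈ s, f i a z := by
  classical
  induction s using Finset.induction_on with
  | empty => simpa using const 0
  | insert i s hi ih => simpa only [Finset.sum_insert hi] using (hf i).add ih

lemma pow (hf : PolyGrowth f) (n : ℕ) : PolyGrowth fun a z => f a z ^ n := by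
  induction n with
  | zero => simpa using const 1
  | succ n ih => simpa only [pow_succ] using ih.mul hf

lemma abs (hf : PolyGrowth f) : PolyGrowth fun a z => |f a z| :=
  ⟨fun a => (hf.continuous a).abs, by simpa only [abs_abs] using hf.bound⟩

lemma dotProduct {u v : α → Vec d → Vec d} (hu : ∀ i, PolyGrowth fun a z => u a z i)
    (hv : ∀ i, PolyGrowth fun a z => v a z i) : PolyGrowth fun a z => u a z ⬝ᵥ v a z :=
  sum fun i => (hu i).mul (hv i)

lemma l2Norm {u : α → Vec d → Vec d}
    (hu : ∀ i, PolyGrowth fun a z => u a z i) : PolyGrowth fun a z => _root_.l2Norm (u a z) := by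
  have hcont : ∀ a, Continuous (u a) := fun a => continuous_pi fun i => (hu i).continuous a
  refine ⟨fun a => continuous_l2Norm.comp (hcont a), ?_⟩
  obtain ⟨C, hC, k, hk⟩ := ((const 1).add (dotProduct hu hu)).bound
  refine ⟨C, hC, k, fun a z => (?_ : _ ≤ _).trans ((le_abs_self _).trans (hk a z))⟩
  rw [← l2Norm_sq, abs_of_nonneg (l2Norm_nonneg _)]
  nlinarith [sq_nonneg (_root_.l2Norm (u a z) - 1), sq_nonneg (_root_.l2Norm (u a z))]

end PolyGrowth

section Gaussian

variable {d : ℕ}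

instance isProbabilityMeasure_gaussVec (d : ℕ) (h : ℝ) : IsProbabilityMeasure (gaussVec d h) := by
  unfold gaussVec
  infer_instance

lemma gaussVec_eq_map (d : ℕ) {h : ℝ} (hh : 0 ≤ h) :
    gaussVec d h = (gaussVec d 1).map (fun z => √h • z) := by
  unfold gaussVec
  have hpi := Measure.pi_map_pi (μ := fun _ : Fin d => gaussianReal 0 (1 : ℝ).toNNReal)
    (f := fun _ x => √h * x) (fun _ => by fun_prop)
  refine Eq.trans ?_ hpi.symm
  congr 1
  ext1 i
  rw [gaussianReal_map_const_mul]
  congr 1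
  · simp
  · ext
    simp [Real.sq_sqrt hh, hh]

lemma integral_gaussVec {h : ℝ} (hh : 0 ≤ h) {f : Vec d → ℝ} (hf : Continuous f) :
    ∫ w, f w ∂gaussVec d h = ∫ z, f (√h • z) ∂gaussVec d 1 := by
  rw [gaussVec_eq_map d hh, integral_map (by fun_prop) hf.aestronglyMeasurable]

lemma gaussVec_map_neg (d : ℕ) : (gaussVec d 1).map (fun z => -z) = gaussVec d 1 := by
  unfold gaussVec
  refine (Measure.pi_map_pi (μ := fun _ : Fin d => gaussianReal 0 (1 : ℝ).toNNReal)
    (f := fun _ x => -x) (fun _ => by fun_prop)).trans ?_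
  congr 1
  ext1 i
  rw [gaussianReal_map_neg, neg_zero]

lemma integral_gaussVec_of_odd {f : Vec d → ℝ} (hf : Continuous f) (hodd : ∀ z, f (-z) = -f z) :
    ∫ z, f z ∂gaussVec d 1 = 0 := by
  have h : ∫ z, f z ∂gaussVec d 1 = ∫ z, f (-z) ∂gaussVec d 1 := by
    conv_lhs => rw [← gaussVec_map_neg d]
    rw [integral_map (by fun_prop) hf.aestronglyMeasurable]
  simp only [hodd, integral_neg] at h
  linarith

lemma integrable_one_add_norm_pow (d k : ℕ) :
    Integrable (fun z : Vec d => (1 + ‖z‖) ^ k) (gaussVec d 1) := by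
  have hid : MemLp (fun z : Vec d => z) (k : ENNReal) (gaussVec d 1) :=
    memLp_pi_iff.2 fun i => (memLp_id_gaussianReal' (μ := 0) (v := (1 : ℝ).toNNReal) (k : ENNReal)
      (by simp)).comp_measurePreserving (measurePreserving_eval _ i)
  refine (((memLp_const (1 : ℝ)).add hid.norm).integrable_norm_pow').congr (.of_forall fun z => ?_)
  simp [abs_of_nonneg (add_nonneg zero_le_one (norm_nonneg z))]

lemma PolyGrowth.integrable {α : Type*} {f : α → Vec d → ℝ} (hf : PolyGrowth f) (a : α) :
    Integrable (f a) (gaussVec d 1) := by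
  obtain ⟨C, -, k, hk⟩ := hf.bound
  exact ((integrable_one_add_norm_pow d k).const_mul C).mono'
    (hf.continuous a).aestronglyMeasurable (.of_forall (hk a))

lemma integral_mul_gaussianReal_eq_integral_deriv {f f' : ℝ → ℝ}
    (hd : ∀ t, HasDerivAt f (f' t) t) (hf : Integrable f (gaussianReal 0 1))
    (hf' : Integrable f' (gaussianReal 0 1))
    (hidf : Integrable (fun t => t * f t) (gaussianReal 0 1)) :
    ∫ t, t * f t ∂gaussianReal 0 1 = ∫ t, f' t ∂gaussianReal 0 1 := by
  have toVolume : ∀ u : ℝ → ℝ, Integrable u (gaussianReal 0 1) →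
      Integrable (fun t => u t * gaussianPDFReal 0 1 t) := fun u hu => by
    rw [gaussianReal_of_var_ne_zero _ one_ne_zero,
      integrable_withDensity_iff_integrable_smul₀' (measurable_gaussianPDF _ _).aemeasurable
      (.of_forall fun _ => gaussianPDF_lt_top)] at hu
    refine hu.congr (.of_forall fun t => ?_)
    simp [toReal_gaussianPDF, mul_comm]
  have hpdf : ∀ t, HasDerivAt (gaussianPDFReal 0 1) (-(t * gaussianPDFReal 0 1 t)) t := fun t => by
    have hexp : HasDerivAt (fun x : ℝ => -(x - 0) ^ 2 / (2 * ((1 : NNReal) : ℝ))) (-t) t :=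
      ((((hasDerivAt_id' t).sub_const 0).fun_pow 2).fun_neg.div_const _).congr_deriv
        (by simp; ring)
    exact (hexp.exp.const_mul _).congr_deriv (by rw [gaussianPDFReal]; ring)
  have parts := integral_mul_deriv_eq_deriv_mul_of_integrable (fun t _ => hd t)
    (fun t _ => hpdf t)
    ((toVolume _ hidf).neg.congr (.of_forall fun t => by simp; ring))
    (toVolume _ hf') (toVolume _ hf)
  rw [integral_gaussianReal_eq_integral_smul one_ne_zero,
    integral_gaussianReal_eq_integral_smul one_ne_zero]
  calc ∫ t, gaussianPDFReal 0 1 t • (t * f t)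
      = -∫ t, f t * -(t * gaussianPDFReal 0 1 t) := by
        rw [← integral_neg]; congr 1; ext t; simp; ring
    _ = ∫ t, gaussianPDFReal 0 1 t • f' t := by
        rw [parts, neg_neg]; congr 1; ext t; simp [mul_comm]

lemma integral_gaussVec_succ {n : ℕ} (i : Fin (n + 1)) {u : Vec (n + 1) → ℝ}
    (hu : Integrable u (gaussVec (n + 1) 1)) :
    (∀ᵐ y ∂gaussVec n 1, Integrable (fun t => u (i.insertNth t y)) (gaussianReal 0 1)) ∧
      ∫ z, u z ∂gaussVec (n + 1) 1
        = ∫ y, ∫ t, u (i.insertNth t y) ∂gaussianReal 0 1 ∂gaussVec n 1 := by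
  simp only [gaussVec, Real.toNNReal_one] at hu ⊢
  have mp := (measurePreserving_piFinSuccAbove (fun _ : Fin (n + 1) => gaussianReal 0 1) i).symm
  have me := (MeasurableEquiv.piFinSuccAbove (fun _ : Fin (n + 1) => ℝ) i).symm.measurableEmbedding
  have hprod := ((mp.integrable_comp_emb me).2 hu).swap
  refine ⟨hprod.prod_right_ae, ?_⟩
  exact (mp.integral_comp me u).symm.trans
    ((integral_prod_swap _).symm.trans (integral_prod _ hprod))

lemma integral_coord_mul_eq_integral_partialDeriv (i : Fin d) {f f' : Vec d → ℝ}
    (hd : ∀ (z : Vec d) (t : ℝ), HasDerivAt (fun t => f (Function.update z i t))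
      (f' (Function.update z i t)) t)
    (hf : Integrable f (gaussVec d 1)) (hf' : Integrable f' (gaussVec d 1))
    (hidf : Integrable (fun z => z i * f z) (gaussVec d 1)) :
    ∫ z, z i * f z ∂gaussVec d 1 = ∫ z, f' z ∂gaussVec d 1 := by
  obtain _ | n := d
  · exact i.elim0
  obtain ⟨hf₁, -⟩ := integral_gaussVec_succ i hf
  obtain ⟨hf'₁, hf'₂⟩ := integral_gaussVec_succ i hf'
  obtain ⟨hidf₁, hidf₂⟩ := integral_gaussVec_succ i hidf
  rw [hf'₂, hidf₂]
  refine integral_congr_ae ?_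
  filter_upwards [hf₁, hf'₁, hidf₁] with y hy hy' hidy
  simp only [Fin.insertNth_apply_same] at hidy ⊢
  refine integral_mul_gaussianReal_eq_integral_deriv (fun t => ?_) hy hy' hidy
  simpa [Fin.update_insertNth] using hd (i.insertNth 0 y) t

end Gaussian

/-! ### Gaussian integration by parts and quadratic weights -/

section Stein

variable {d : ℕ}

lemma integral_mul_affine_eq_integral_fderiv {Ψ : Vec d → ℝ} {DΨ : Vec d → Vec d →L[ℝ] ℝ}
    (hd : ∀ z, HasFDerivAt Ψ (DΨ z) z) (hΨ : PolyGrowth fun (_ : Unit) => Ψ)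
    (hDΨ : ∀ i, PolyGrowth fun (_ : Unit) z => DΨ z (Pi.single i 1)) (c : Vec d) (N : Mat d) :
    ∫ z, Ψ z * (z ⬝ᵥ (c + N *ᵥ z) - N.trace) ∂gaussVec d 1
      = ∫ z, DΨ z (c + N *ᵥ z) ∂gaussVec d 1 := by
  have hG : ∀ i, PolyGrowth fun (_ : Unit) (z : Vec d) => (c + N *ᵥ z) i := fun i =>
    (PolyGrowth.const (c i)).add (.dotProduct (fun j => .const (N i j)) .coord)
  have hdiv : ∀ i, PolyGrowth fun (_ : Unit) (z : Vec d) => Ψ z * N i i := fun i =>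
    hΨ.mul (.const _)
  have hcoord : ∀ i, ∫ z : Vec d, z i * (Ψ z * (c + N *ᵥ z) i) ∂gaussVec d 1
      = ∫ z : Vec d, (DΨ z (Pi.single i 1) * (c + N *ᵥ z) i + Ψ z * N i i) ∂gaussVec d 1 := by
    refine fun i => integral_coord_mul_eq_integral_partialDeriv i (fun z t => ?_)
      ((hΨ.mul (hG i)).integrable ()) ((((hDΨ i).mul (hG i)).add (hdiv i)).integrable ())
      (((PolyGrowth.coord i).mul (hΨ.mul (hG i))).integrable ())
    have hu := hasDerivAt_update z i t
    have hN : HasDerivAt (fun t => (c + N *ᵥ update z i t) i) (N i i) t := by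
      simpa using (hasDerivAt_pi.1
        ((N.mulVecLin.toContinuousLinearMap).hasFDerivAt.comp_hasDerivAt t hu) i).const_add (c i)
    exact ((hd _).comp_hasDerivAt t hu).mul hN
  have hleft : ∀ z, Ψ z * (z ⬝ᵥ (c + N *ᵥ z) - N.trace)
      = ∑ i, (z i * (Ψ z * (c + N *ᵥ z) i) - Ψ z * N i i) := fun z => by
    simp only [mul_sub, Finset.sum_sub_distrib, dotProduct, Matrix.trace, Matrix.diag_apply,
      Finset.mul_sum, mul_left_comm]
  have hright : ∀ z, DΨ z (c + N *ᵥ z) = ∑ i, DΨ z (Pi.single i 1) * (c + N *ᵥ z) i := fun z => by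
    conv_lhs => rw [pi_eq_sum_univ' (c + N *ᵥ z)]
    simp only [map_sum, map_smul, smul_eq_mul, mul_comm]
  simp_rw [hleft, hright]
  rw [integral_finsetSum _ fun i _ =>
      (((PolyGrowth.coord i).mul (hΨ.mul (hG i))).sub (hdiv i)).integrable (),
    integral_finsetSum _ fun i _ => ((hDΨ i).mul (hG i)).integrable ()]
  refine Finset.sum_congr rfl fun i _ => ?_
  rw [integral_sub (((PolyGrowth.coord i).mul (hΨ.mul (hG i))).integrable ())
      ((hdiv i).integrable ()), hcoord i,
    integral_add (((hDΨ i).mul (hG i)).integrable ()) ((hdiv i).integrable ()),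
    add_sub_cancel_right]

end Stein

section QuadWeight

variable {d : ℕ}

/-- The weight `β + b · z + (z · B z - Tr B)`: the linearised one-step operator is the expectation
against such a weight in the standard Gaussian variable `z`. -/
def quadWeight (β : ℝ) (b : Vec d) (B : Mat d) (z : Vec d) : ℝ :=
  β + b ⬝ᵥ z + (z ⬝ᵥ B *ᵥ z - B.trace)

lemma polyGrowth_mulVec {α : Type*} (A : Mat d) (i : Fin d) :
    PolyGrowth fun (_ : α) (z : Vec d) => (A *ᵥ z) i :=
  .dotProduct (fun j => .const (A i j)) .coord

lemma polyGrowth_one_add_l2Norm_pow {α : Type*} (k : ℕ) :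
    PolyGrowth fun (_ : α) (z : Vec d) => (1 + l2Norm z) ^ k :=
  ((PolyGrowth.const 1).add (.l2Norm .coord)).pow k

lemma PolyGrowth.quadWeight {α : Type*} (β : ℝ) {b : α → Vec d} {B : α → Mat d}
    (hb : ∀ i, PolyGrowth fun a (_ : Vec d) => b a i)
    (hB : ∀ i j, PolyGrowth fun a (_ : Vec d) => B a i j) :
    PolyGrowth fun a => _root_.quadWeight β (b a) (B a) :=
  ((PolyGrowth.const β).add (.dotProduct hb .coord)).add
    ((PolyGrowth.dotProduct .coord fun i => .dotProduct (hB i) .coord).sub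
      (.sum fun i => hB i i))

lemma polyGrowth_quadWeight {α : Type*} (β : ℝ) (b : Vec d) (B : Mat d) :
    PolyGrowth fun (_ : α) => quadWeight β b B :=
  .quadWeight β (fun _ => .const _) fun _ _ => .const _

lemma integral_quadWeight (β : ℝ) (b : Vec d) (B : Mat d) :
    ∫ z, quadWeight β b B z ∂gaussVec d 1 = β := by
  have hB := polyGrowth_quadWeight (α := Unit) 0 b B
  have hsplit : ∀ z, quadWeight β b B z = β + quadWeight 0 b B z := fun z => by
    unfold quadWeight; ring
  have hstein := integral_mul_affine_eq_integral_fderiv (fun z => hasFDerivAt_const (1 : ℝ) z)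
    (.const 1) (fun _ => .const 0) b B
  simp only [one_mul, _root_.zero_apply, integral_zero] at hstein
  simp_rw [hsplit]
  rw [integral_add (integrable_const _) (hB.integrable ()), integral_const, probReal_univ, one_smul]
  refine add_eq_left.2 (Eq.trans (integral_congr_ae (.of_forall fun z => ?_)) hstein)
  simp only [quadWeight, dotProduct_add, dotProduct_comm b z]
  ring

lemma integral_quadWeight_mul_dotProduct (β : ℝ) (b : Vec d) (B : Mat d) (u : Vec d) :
    ∫ z, quadWeight β b B z * (u ⬝ᵥ z) ∂gaussVec d 1 = u ⬝ᵥ b := by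
  have hu : PolyGrowth fun (_ : Unit) (z : Vec d) => u ⬝ᵥ z :=
    .dotProduct (fun i => .const (u i)) .coord
  have heven := (polyGrowth_quadWeight (α := Unit) β 0 B).mul hu
  have hsplit : ∀ z, quadWeight β b B z * (u ⬝ᵥ z)
      = quadWeight β 0 B z * (u ⬝ᵥ z) + (u ⬝ᵥ z) * (z ⬝ᵥ b) := fun z => by
    simp only [quadWeight, zero_dotProduct, dotProduct_comm b z]; ring
  have hodd : ∫ z, quadWeight β 0 B z * (u ⬝ᵥ z) ∂gaussVec d 1 = 0 :=
    integral_gaussVec_of_odd (heven.continuous ()) fun z => by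
      simp only [quadWeight, mulVec_neg, dotProduct_neg, neg_dotProduct, zero_dotProduct, neg_neg,
        mul_neg, neg_zero]
  have hstein := integral_mul_affine_eq_integral_fderiv
    (fun z => (dotProductBilin ℝ ℝ u).toContinuousLinearMap.hasFDerivAt (x := z)) hu
    (fun i => by simpa using PolyGrowth.const (u i)) b 0
  have hlin : ∫ z, (u ⬝ᵥ z) * (z ⬝ᵥ b) ∂gaussVec d 1 = u ⬝ᵥ b := by simpa using hstein
  simp_rw [hsplit]
  rw [integral_add (heven.integrable ())
    ((hu.mul (.dotProduct .coord fun i => .const (b i))).integrable ()), hodd, hlin, zero_add]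

end QuadWeight

section PosSemidef

variable {d : ℕ} {B : Mat d}

lemma exists_eq_transpose_mul_self (hB : B.PosSemidef) : ∃ R : Mat d, B = Rᵀ * R := by
  open scoped MatrixOrder in
  obtain ⟨R, hR⟩ := CStarAlgebra.nonneg_iff_eq_star_mul_self.1 hB.nonneg
  exact ⟨R, hR⟩

lemma trace_mul_transpose_self (R : Mat d) : (R * Rᵀ).trace = ∑ i, l2Norm (R i) ^ 2 := by
  simp_rw [l2Norm_sq]
  rfl

lemma l2Norm_mulVec_sq_le (hB : B.PosSemidef) (z : Vec d) :
    l2Norm (B *ᵥ z) ^ 2 ≤ B.trace * (z ⬝ᵥ B *ᵥ z) := by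
  obtain ⟨R, rfl⟩ := exists_eq_transpose_mul_self hB
  have hquad : z ⬝ᵥ (Rᵀ * R) *ᵥ z = l2Norm (R *ᵥ z) ^ 2 := by
    rw [← mulVec_mulVec, dotProduct_mulVec, vecMul_transpose, l2Norm_sq]
  have htrace := trace_mul_transpose_self Rᵀ
  rw [transpose_transpose] at htrace
  rw [hquad, htrace, l2Norm_sq, Finset.sum_mul]
  refine Finset.sum_le_sum fun i _ => ?_
  calc ((Rᵀ * R) *ᵥ z) i * ((Rᵀ * R) *ᵥ z) i = |Rᵀ i ⬝ᵥ R *ᵥ z| ^ 2 := by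
        rw [← mulVec_mulVec, sq_abs, sq]; rfl
    _ ≤ (l2Norm (Rᵀ i) * l2Norm (R *ᵥ z)) ^ 2 := by gcongr; exact abs_dotProduct_le _ _
    _ = _ := mul_pow _ _ _

lemma trace_conj_le (hB : B.PosSemidef) (M : Mat d) :
    (M * B * Mᵀ).trace ≤ l2OpNorm M ^ 2 * B.trace := by
  obtain ⟨R, rfl⟩ := exists_eq_transpose_mul_self hB
  have hM : M * (Rᵀ * R) * Mᵀ = (R * Mᵀ)ᵀ * (R * Mᵀ) := by
    simp only [transpose_mul, transpose_transpose, Matrix.mul_assoc]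
  rw [hM, trace_mul_comm, trace_mul_comm Rᵀ, trace_mul_transpose_self, trace_mul_transpose_self,
    Finset.mul_sum]
  refine Finset.sum_le_sum fun i _ => ?_
  rw [← mul_pow]
  have hrow : (R * Mᵀ) i = M *ᵥ R i := by
    ext j
    simp only [mul_apply, transpose_apply, mulVec, dotProduct, mul_comm]
  exact pow_le_pow_left₀ (l2Norm_nonneg _) (hrow ▸ l2Norm_mulVec_le M (R i)) 2

lemma dotProduct_mulVec_le_trace (hB : B.PosSemidef) (z : Vec d) :
    z ⬝ᵥ B *ᵥ z ≤ B.trace * l2Norm z ^ 2 := by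
  have h0 : 0 ≤ z ⬝ᵥ B *ᵥ z := hB.dotProduct_mulVec_nonneg z
  rcases h0.eq_or_lt with h | h
  · rw [← h]
    exact mul_nonneg hB.trace_nonneg (sq_nonneg _)
  refine le_of_mul_le_mul_right ?_ h
  calc (z ⬝ᵥ B *ᵥ z) * (z ⬝ᵥ B *ᵥ z) ≤ (l2Norm z * l2Norm (B *ᵥ z)) ^ 2 := by
        rw [← sq]
        gcongr
        exact (le_abs_self _).trans (abs_dotProduct_le _ _)
    _ ≤ l2Norm z ^ 2 * (B.trace * (z ⬝ᵥ B *ᵥ z)) := by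
        rw [mul_pow]
        gcongr
        exact l2Norm_mulVec_sq_le hB z
    _ = _ := by ring

end PosSemidef

/-- Conditions under which `quadWeight β b B` is a positive weight of mass one up to errors of
order `h`; the number `Q ≥ 1` gathers all the constants. -/
structure Admissible {d : ℕ} (Q h β : ℝ) (b : Vec d) (B : Mat d) : Prop where
  one_le : 1 ≤ Q
  pos : 0 < h
  le : h ≤ Q
  abs_sub_one_le : |β - 1| ≤ Q * h
  l2Norm_le : l2Norm b ≤ Q * √h
  posSemidef : B.PosSemidef
  trace_le : B.trace ≤ 1 + Q * h
  neg_le : ∀ z, -(Q * h) ≤ b ⬝ᵥ z + z ⬝ᵥ B *ᵥ z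

namespace Admissible

variable {d : ℕ} {Q h β : ℝ} {b : Vec d} {B : Mat d}

lemma sqrt_le (H : Admissible Q h β b B) : √h ≤ Q :=
  Real.sqrt_le_iff.2 ⟨by linarith [H.one_le], by nlinarith [H.one_le, H.le]⟩

/-- The lower bound `neg_le` at `z / 2` keeps half of the quadratic form. -/
lemma le_quadWeight (H : Admissible Q h β b B) (z : Vec d) :
    h + (z ⬝ᵥ B *ᵥ z) / 2 ≤ quadWeight β b B z + 5 * Q * h := by
  have hhalf := H.neg_le ((1 / 2 : ℝ) • z)
  simp only [mulVec_smul, dotProduct_smul, smul_dotProduct, smul_eq_mul] at hhalf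
  have hβ := neg_le_of_abs_le H.abs_sub_one_le
  have hh : h ≤ Q * h := le_mul_of_one_le_left H.pos.le H.one_le
  unfold quadWeight
  linarith [H.trace_le]

lemma le_add (H : Admissible Q h β b B) (z : Vec d) :
    h ≤ quadWeight β b B z + 5 * Q * h := by
  have := H.le_quadWeight z
  have := H.posSemidef.dotProduct_mulVec_nonneg z
  rw [star_trivial] at this
  linarith

lemma trace_le_sq (H : Admissible Q h β b B) : B.trace ≤ 2 * Q ^ 2 := by
  nlinarith [H.trace_le, H.one_le, H.le]

lemma l2Norm_mulVec_le_sqrt (H : Admissible Q h β b B) (z : Vec d) :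
    l2Norm (B *ᵥ z) ≤ 2 * Q * √(quadWeight β b B z + 5 * Q * h) := by
  have hQ := H.one_le
  refine le_of_sq_le_sq ?_ (by positivity)
  rw [mul_pow, Real.sq_sqrt (H.pos.le.trans (H.le_add z))]
  calc l2Norm (B *ᵥ z) ^ 2 ≤ B.trace * (z ⬝ᵥ B *ᵥ z) := l2Norm_mulVec_sq_le H.posSemidef z
    _ ≤ (2 * Q ^ 2) * (2 * (quadWeight β b B z + 5 * Q * h)) := by
        have hz : 0 ≤ z ⬝ᵥ B *ᵥ z := H.posSemidef.dotProduct_mulVec_nonneg z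
        have := H.le_quadWeight z
        exact mul_le_mul H.trace_le_sq (by linarith [H.pos]) hz (by positivity)
    _ = _ := by ring

lemma quadWeight_le (H : Admissible Q h β b B) (z : Vec d) :
    quadWeight β b B z ≤ 4 * Q ^ 2 * (1 + l2Norm z) ^ 2 := by
  have hz := l2Norm_nonneg z
  have hlin : b ⬝ᵥ z ≤ Q ^ 2 * l2Norm z :=
    calc b ⬝ᵥ z ≤ l2Norm b * l2Norm z := (le_abs_self _).trans (abs_dotProduct_le b z)
      _ ≤ (Q * Q) * l2Norm z := by
        gcongr
        exact H.l2Norm_le.trans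
          (mul_le_mul_of_nonneg_left H.sqrt_le (zero_le_one.trans H.one_le))
      _ = _ := by ring
  have hquad : z ⬝ᵥ B *ᵥ z ≤ 2 * Q ^ 2 * l2Norm z ^ 2 :=
    (dotProduct_mulVec_le_trace H.posSemidef z).trans (by gcongr; exact H.trace_le_sq)
  have hβ : β ≤ 2 * Q ^ 2 := by
    nlinarith [le_of_abs_le H.abs_sub_one_le, H.one_le, H.le]
  unfold quadWeight
  nlinarith [H.posSemidef.trace_nonneg, mul_nonneg (sq_nonneg Q) hz, sq_nonneg Q,
    mul_nonneg (sq_nonneg Q) (sq_nonneg (l2Norm z))]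

lemma abs_quadWeight_le_add (H : Admissible Q h β b B) (z : Vec d) :
    |quadWeight β b B z| ≤ quadWeight β b B z + 10 * Q * h := by
  have := H.le_add z
  have hQh : 0 ≤ Q * h := mul_nonneg (by linarith [H.one_le]) H.pos.le
  rw [abs_le]
  constructor <;> linarith [H.pos]

lemma integral_abs_quadWeight_le (H : Admissible Q h β b B) :
    ∫ z, |quadWeight β b B z| ∂gaussVec d 1 ≤ 1 + 11 * Q * h := by
  have hw := polyGrowth_quadWeight (α := Unit) β b B
  calc ∫ z, |quadWeight β b B z| ∂gaussVec d 1
      ≤ ∫ z, (quadWeight β b B z + 10 * Q * h) ∂gaussVec d 1 :=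
        integral_mono (hw.abs.integrable ()) ((hw.add (.const _)).integrable ())
          H.abs_quadWeight_le_add
    _ = β + 10 * Q * h := by
        rw [integral_add (hw.integrable ()) (integrable_const _), integral_quadWeight]
        simp
    _ ≤ 1 + 11 * Q * h := by linarith [le_of_abs_le H.abs_sub_one_le]

lemma abs_quadWeight_le_sqrt (H : Admissible Q h β b B) (z : Vec d) :
    |quadWeight β b B z| ≤ 18 * Q ^ 2 * √(quadWeight β b B z + 5 * Q * h) * (1 + l2Norm z) := by
  set τ := quadWeight β b B z + 5 * Q * h
  have hhτ : h ≤ τ := H.le_add z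
  have hQ := H.one_le
  have hz := l2Norm_nonneg z
  have hτ0 : 0 ≤ τ := H.pos.le.trans hhτ
  have habs : |quadWeight β b B z| ≤ 6 * Q * τ := by
    refine (H.abs_quadWeight_le_add z).trans ?_
    nlinarith [mul_le_mul_of_nonneg_left hhτ (zero_le_one.trans hQ)]
  have hsqrt : √τ ≤ 3 * Q * (1 + l2Norm z) := by
    refine Real.sqrt_le_iff.2 ⟨by positivity, ?_⟩
    have hQh : Q * h ≤ Q ^ 2 := by nlinarith [H.le]
    nlinarith [H.quadWeight_le z, mul_nonneg (sq_nonneg Q) hz,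
      mul_nonneg (sq_nonneg Q) (sq_nonneg (l2Norm z))]
  calc |quadWeight β b B z| ≤ 6 * Q * (√τ * √τ) := by rwa [Real.mul_self_sqrt hτ0]
    _ ≤ 6 * Q * (√τ * (3 * Q * (1 + l2Norm z))) := by gcongr
    _ = _ := by ring

lemma conj (H : Admissible Q h β b B) {M : Mat d} {η : ℝ} (hM : l2OpNorm M ≤ 1 + η)
    (hη : η ≤ 1) (hηh : η ≤ h) : Admissible (7 * Q) h β (M *ᵥ b) (M * B * Mᵀ) := by
  have hQ := H.one_le
  have hh := H.pos
  have hQh : 0 < Q * h := by positivity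
  have hM0 := l2OpNorm_nonneg M
  have hMsq : l2OpNorm M ^ 2 ≤ 1 + 3 * h ∧ l2OpNorm M ^ 2 ≤ 4 := by constructor <;> nlinarith
  refine ⟨by linarith, hh, by linarith [H.le], by linarith [H.abs_sub_one_le], ?_, ?_, ?_,
    fun z => ?_⟩
  · calc l2Norm (M *ᵥ b) ≤ 2 * (Q * √h) := (l2Norm_mulVec_le M b).trans
          (mul_le_mul (by linarith) H.l2Norm_le (l2Norm_nonneg b) zero_le_two)
      _ ≤ 7 * Q * √h := by nlinarith [mul_nonneg (zero_le_one.trans hQ) (Real.sqrt_nonneg h)]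
  · rw [← conjTranspose_eq_transpose_of_trivial]
    exact H.posSemidef.mul_mul_conjTranspose_same M
  · calc (M * B * Mᵀ).trace ≤ l2OpNorm M ^ 2 * (1 + Q * h) :=
          (trace_conj_le H.posSemidef M).trans (by gcongr; exact H.trace_le)
      _ ≤ 1 + 7 * Q * h := by nlinarith [mul_le_mul_of_nonneg_right hMsq.2 hQh.le]
  · have hz : (M *ᵥ b) ⬝ᵥ z + z ⬝ᵥ (M * B * Mᵀ) *ᵥ z
        = b ⬝ᵥ (Mᵀ *ᵥ z) + (Mᵀ *ᵥ z) ⬝ᵥ B *ᵥ (Mᵀ *ᵥ z) := by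
      rw [← mulVec_mulVec, ← mulVec_mulVec, dotProduct_mulVec z M, ← mulVec_transpose,
        dotProduct_comm (M *ᵥ b), dotProduct_mulVec z M, ← mulVec_transpose, dotProduct_comm b]
    rw [hz]
    linarith [H.neg_le (Mᵀ *ᵥ z)]

end Admissible

/-! ### The velocity field -/

section Velocity

variable {d : ℕ}

/-- For `c`, `S` moving with velocities `c'`, `S'` and `b`, `B` moving so that `S b` and `S B Sᵀ`
stay fixed, the derivative of `∫ ψ (c + S z) π(z)` is `∫ Dψ (c + S z) V(z)` where `V` is this
vector field and `π = quadWeight β b B`. -/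
def velocity (β : ℝ) (b : Vec d) (B : Mat d) (c' : Vec d) (S' : Mat d) (z : Vec d) : Vec d :=
  quadWeight β b B z • (c' + S' *ᵥ z) - S' *ᵥ (b + (2 : ℝ) • B *ᵥ z)

lemma polyGrowth_velocity {α : Type*} (β : ℝ) (b : Vec d) (B : Mat d) (c' : Vec d) (S' : Mat d)
    (i : Fin d) : PolyGrowth fun (_ : α) z => velocity β b B c' S' z i :=
  ((polyGrowth_quadWeight β b B).mul ((PolyGrowth.const _).add (polyGrowth_mulVec S' i))).sub
    (.dotProduct (fun j => .const (S' i j))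
      fun j => (PolyGrowth.const (b j)).add ((PolyGrowth.const 2).mul (polyGrowth_mulVec B j)))

lemma integral_dotProduct_velocity (β : ℝ) (b : Vec d) (B : Mat d) (c' : Vec d) (S' : Mat d)
    (u : Vec d) : ∫ z, u ⬝ᵥ velocity β b B c' S' z ∂gaussVec d 1 = β * (u ⬝ᵥ c') := by
  have hw := polyGrowth_quadWeight (α := Unit) β b B
  have hu : ∀ A : Mat d, PolyGrowth fun (_ : Unit) (z : Vec d) => (Aᵀ *ᵥ u) ⬝ᵥ z := fun A =>
    .dotProduct (fun i => .const _) .coord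
  have hsplit : ∀ z, u ⬝ᵥ velocity β b B c' S' z = quadWeight β b B z * (u ⬝ᵥ c')
      + quadWeight β b B z * ((S'ᵀ *ᵥ u) ⬝ᵥ z) - (u ⬝ᵥ S' *ᵥ b)
      - 2 * (((S' * B)ᵀ *ᵥ u) ⬝ᵥ z) := fun z => by
    simp only [velocity, dotProduct_sub, dotProduct_smul, dotProduct_add, mulVec_add, smul_eq_mul,
      mulVec_smul, mulVec_transpose, ← dotProduct_mulVec, ← mulVec_mulVec]
    ring
  have hodd : ∫ z, ((S' * B)ᵀ *ᵥ u) ⬝ᵥ z ∂gaussVec d 1 = 0 :=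
    integral_gaussVec_of_odd ((hu _).continuous ()) fun z => dotProduct_neg _ _
  simp_rw [hsplit]
  rw [integral_sub ((((hw.mul (.const _)).add (hw.mul (hu S'))).sub (.const _)).integrable ())
      (((PolyGrowth.const 2).mul (hu _)).integrable ()),
    integral_sub (((hw.mul (.const _)).add (hw.mul (hu S'))).integrable ()) (integrable_const _),
    integral_add ((hw.mul (.const _)).integrable ()) ((hw.mul (hu S')).integrable ()),
    integral_mul_const, integral_quadWeight, integral_quadWeight_mul_dotProduct,
    integral_const_mul, hodd, integral_const, probReal_univ, mulVec_transpose, ← dotProduct_mulVec]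
  simp

/-- If `v` is close to a large multiple of the direction `e`, its length is nearly its component
along `e`. -/
lemma l2Norm_mul_le_dotProduct_add (e v : Vec d) {τ : ℝ} (hτ : 0 < τ) :
    l2Norm e * l2Norm v ≤ e ⬝ᵥ v + l2Norm (v - τ • e) ^ 2 / (2 * τ) := by
  have hexp : l2Norm (v - τ • e) ^ 2
      = l2Norm v ^ 2 - 2 * τ * (e ⬝ᵥ v) + τ ^ 2 * l2Norm e ^ 2 := by
    simp only [l2Norm_sq, sub_dotProduct, dotProduct_sub, smul_dotProduct, dotProduct_smul,
      smul_eq_mul, dotProduct_comm v e]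
    ring
  rw [hexp, ← sub_nonneg]
  have : e ⬝ᵥ v + (l2Norm v ^ 2 - 2 * τ * (e ⬝ᵥ v) + τ ^ 2 * l2Norm e ^ 2) / (2 * τ)
      - l2Norm e * l2Norm v = (l2Norm v - τ * l2Norm e) ^ 2 / (2 * τ) := by
    field_simp
    ring
  rw [this]
  positivity

variable {Q h β : ℝ} {b e m : Vec d} {B Δ : Mat d}

namespace Admissible

lemma l2Norm_quadWeight_smul_le (H : Admissible Q h β b B) (hm : l2Norm m ≤ Q * l2Norm e)
    (hΔ : l2OpNorm Δ ≤ Q * l2Norm e) (z : Vec d) :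
    l2Norm (quadWeight β b B z • (h • m + √h • Δ *ᵥ z))
      ≤ 36 * Q ^ 4 * √h * √(quadWeight β b B z + 5 * Q * h) * (1 + l2Norm z) ^ 2 * l2Norm e := by
  have hQ := H.one_le
  have hz := l2Norm_nonneg z
  have he := l2Norm_nonneg e
  have hsum : l2Norm (h • m + √h • Δ *ᵥ z) ≤ √h * (2 * Q ^ 2 * (1 + l2Norm z) * l2Norm e) :=
    calc l2Norm (h • m + √h • Δ *ᵥ z) ≤ √h * (√h * l2Norm m + l2Norm (Δ *ᵥ z)) := by
          refine (l2Norm_add_le _ _).trans_eq ?_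
          rw [l2Norm_smul, l2Norm_smul, abs_of_nonneg H.pos.le, abs_of_nonneg (Real.sqrt_nonneg h)]
          linear_combination (-l2Norm m) * Real.mul_self_sqrt H.pos.le
      _ ≤ √h * (Q * (Q * l2Norm e) + Q * l2Norm e * l2Norm z) := by
          gcongr
          · exact l2Norm_nonneg m
          · exact H.sqrt_le
          · exact (l2Norm_mulVec_le _ _).trans (by gcongr)
      _ ≤ √h * (2 * Q ^ 2 * (1 + l2Norm z) * l2Norm e) := by
          gcongr
          have hQe : Q * l2Norm e ≤ Q ^ 2 * l2Norm e := by gcongr; nlinarith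
          nlinarith [mul_le_mul_of_nonneg_right hQe hz, mul_nonneg (mul_nonneg (sq_nonneg Q) he) hz,
            mul_nonneg (sq_nonneg Q) he]
  calc _ ≤ (18 * Q ^ 2 * √(quadWeight β b B z + 5 * Q * h) * (1 + l2Norm z))
        * (√h * (2 * Q ^ 2 * (1 + l2Norm z) * l2Norm e)) := by
        rw [l2Norm_smul]
        gcongr
        · exact l2Norm_nonneg _
        · exact H.abs_quadWeight_le_sqrt z
    _ = _ := by ring

lemma l2Norm_mulVec_grad_le (H : Admissible Q h β b B) (hΔ : l2OpNorm Δ ≤ Q * l2Norm e)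
    (z : Vec d) : l2Norm ((√h • Δ) *ᵥ (b + (2 : ℝ) • B *ᵥ z))
      ≤ 5 * Q ^ 2 * √h * √(quadWeight β b B z + 5 * Q * h) * l2Norm e := by
  set τ := quadWeight β b B z + 5 * Q * h
  have hQ := H.one_le
  have hgrad : l2Norm (b + (2 : ℝ) • B *ᵥ z) ≤ 5 * Q * √τ :=
    calc l2Norm (b + (2 : ℝ) • B *ᵥ z) ≤ l2Norm b + 2 * l2Norm (B *ᵥ z) := by
          simpa using l2Norm_add_le b ((2 : ℝ) • B *ᵥ z)
      _ ≤ Q * √τ + 2 * (2 * Q * √τ) := by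
          gcongr
          · exact H.l2Norm_le.trans (by gcongr; exact H.le_add z)
          · exact H.l2Norm_mulVec_le_sqrt z
      _ = 5 * Q * √τ := by ring
  calc _ ≤ √h * (Q * l2Norm e * (5 * Q * √τ)) := by
        rw [smul_mulVec, l2Norm_smul, abs_of_nonneg (Real.sqrt_nonneg h)]
        gcongr
        exact (l2Norm_mulVec_le _ _).trans
          (mul_le_mul hΔ hgrad (l2Norm_nonneg _) ((l2OpNorm_nonneg Δ).trans hΔ))
    _ = _ := by ring

lemma l2Norm_velocity_sub_le (H : Admissible Q h β b B) (hm : l2Norm m ≤ Q * l2Norm e)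
    (hΔ : l2OpNorm Δ ≤ Q * l2Norm e) (z : Vec d) :
    l2Norm (velocity β b B (e + h • m) (√h • Δ) z - (quadWeight β b B z + 5 * Q * h) • e)
      ≤ 46 * Q ^ 4 * √h * √(quadWeight β b B z + 5 * Q * h) * (1 + l2Norm z) ^ 2 * l2Norm e := by
  set p := quadWeight β b B z with hp
  set τ := p + 5 * Q * h with hτ
  have hQ := H.one_le
  have he := l2Norm_nonneg e
  have hz : 1 ≤ 1 + l2Norm z := by linarith [l2Norm_nonneg z]
  have hdrift : l2Norm ((5 * Q * h) • e) ≤ 5 * Q ^ 4 * √h * √τ * (1 + l2Norm z) ^ 2 * l2Norm e :=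
    calc l2Norm ((5 * Q * h) • e) = 5 * Q ^ 1 * √h * √h * 1 ^ 2 * l2Norm e := by
          have hh := H.pos.le
          rw [l2Norm_smul, abs_of_nonneg (by positivity)]
          linear_combination (-5 * Q * l2Norm e) * Real.mul_self_sqrt hh
      _ ≤ _ := by
          gcongr
          · norm_num
          · exact H.le_add z
  have hgrad : l2Norm ((√h • Δ) *ᵥ (b + (2 : ℝ) • B *ᵥ z))
      ≤ 5 * Q ^ 4 * √h * √τ * (1 + l2Norm z) ^ 2 * l2Norm e :=
    calc _ ≤ 5 * Q ^ 2 * √h * √τ * 1 ^ 2 * l2Norm e := by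
          simpa only [one_pow, mul_one] using H.l2Norm_mulVec_grad_le hΔ z
      _ ≤ _ := by
          gcongr
          norm_num
  have hsplit : velocity β b B (e + h • m) (√h • Δ) z - τ • e
      = p • (h • m + √h • Δ *ᵥ z) - (√h • Δ) *ᵥ (b + (2 : ℝ) • B *ᵥ z) - (5 * Q * h) • e := by
    simp only [velocity, ← hp, hτ, smul_mulVec, add_smul, smul_add]
    abel
  rw [hsplit]
  linarith [H.l2Norm_quadWeight_smul_le hm hΔ z,
    l2Norm_sub_le (p • (h • m + √h • Δ *ᵥ z) - (√h • Δ) *ᵥ (b + (2 : ℝ) • B *ᵥ z))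
      ((5 * Q * h) • e),
    l2Norm_sub_le (p • (h • m + √h • Δ *ᵥ z)) ((√h • Δ) *ᵥ (b + (2 : ℝ) • B *ᵥ z))]

lemma l2Norm_velocity_le (H : Admissible Q h β b B) (hm : l2Norm m ≤ Q * l2Norm e)
    (hΔ : l2OpNorm Δ ≤ Q * l2Norm e) (z : Vec d) :
    l2Norm e * l2Norm (velocity β b B (e + h • m) (√h • Δ) z)
      ≤ e ⬝ᵥ velocity β b B (e + h • m) (√h • Δ) z
        + 1058 * Q ^ 8 * h * l2Norm e ^ 2 * (1 + l2Norm z) ^ 4 := by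
  set τ := quadWeight β b B z + 5 * Q * h
  have hτ : 0 < τ := H.pos.trans_le (H.le_add z)
  refine (l2Norm_mul_le_dotProduct_add e _ hτ).trans (add_le_add_right ?_ _)
  rw [div_le_iff₀ (by positivity)]
  calc _ ≤ (46 * Q ^ 4 * √h * √τ * (1 + l2Norm z) ^ 2 * l2Norm e) ^ 2 :=
        pow_le_pow_left₀ (l2Norm_nonneg _) (H.l2Norm_velocity_sub_le hm hΔ z) 2
    _ = 2116 * Q ^ 8 * √h ^ 2 * √τ ^ 2 * l2Norm e ^ 2 * (1 + l2Norm z) ^ 4 := by ring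
    _ = _ := by rw [Real.sq_sqrt H.pos.le, Real.sq_sqrt hτ.le]; ring

lemma mul_dotProduct_le (H : Admissible Q h β b B) (hm : l2Norm m ≤ Q * l2Norm e) :
    β * (e ⬝ᵥ (e + h • m)) ≤ (1 + Q * h) * ((1 + Q * h) * l2Norm e ^ 2) := by
  have he := l2Norm_nonneg e
  have hβ : |β| ≤ 1 + Q * h := by
    linarith [abs_sub_abs_le_abs_sub β 1, H.abs_sub_one_le, abs_one (α := ℝ)]
  have hem : |e ⬝ᵥ (e + h • m)| ≤ (1 + Q * h) * l2Norm e ^ 2 :=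
    calc |e ⬝ᵥ (e + h • m)| ≤ l2Norm e * (l2Norm e + h * (Q * l2Norm e)) := by
          refine (abs_dotProduct_le _ _).trans (mul_le_mul_of_nonneg_left ?_ he)
          refine (l2Norm_add_le _ _).trans (add_le_add_right ?_ _)
          rw [l2Norm_smul, abs_of_pos H.pos]
          exact mul_le_mul_of_nonneg_left hm H.pos.le
      _ = _ := by ring
  calc β * (e ⬝ᵥ (e + h • m)) ≤ |β| * |e ⬝ᵥ (e + h • m)| := (le_abs_self _).trans (abs_mul _ _).le
    _ ≤ _ := mul_le_mul hβ hem (abs_nonneg _) ((abs_nonneg _).trans hβ)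

end Admissible

lemma exists_integral_l2Norm_velocity_le (d : ℕ) (Q : ℝ) :
    ∃ C ≥ 0, ∀ (h β : ℝ) (b e m : Vec d) (B Δ : Mat d), Admissible Q h β b B → e ≠ 0 →
      l2Norm m ≤ Q * l2Norm e → l2OpNorm Δ ≤ Q * l2Norm e →
      ∫ z, l2Norm (velocity β b B (e + h • m) (√h • Δ) z) ∂gaussVec d 1
        ≤ (1 + C * h) * l2Norm e := by
  set G := ∫ z : Vec d, (1 + l2Norm z) ^ 4 ∂gaussVec d 1
  have : 0 ≤ G := integral_nonneg fun z => by have := l2Norm_nonneg z; positivity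
  refine ⟨2 * |Q| + |Q| ^ 3 + 1058 * Q ^ 8 * G, by positivity,
    fun h β b e m B Δ H he0 hm hΔ => ?_⟩
  have hQ := H.one_le
  rw [abs_of_pos (by linarith)]
  have he : 0 < l2Norm e := (l2Norm_nonneg e).lt_of_ne' (l2Norm_eq_zero.not.2 he0)
  have hV : ∀ i, PolyGrowth fun (_ : Unit) z => velocity β b B (e + h • m) (√h • Δ) z i :=
    polyGrowth_velocity β b B _ _
  have hpow := polyGrowth_one_add_l2Norm_pow (α := Unit) (d := d) 4
  refine le_of_mul_le_mul_left ?_ he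
  calc l2Norm e * ∫ z, l2Norm (velocity β b B (e + h • m) (√h • Δ) z) ∂gaussVec d 1
      ≤ ∫ z, (e ⬝ᵥ velocity β b B (e + h • m) (√h • Δ) z
        + 1058 * Q ^ 8 * h * l2Norm e ^ 2 * (1 + l2Norm z) ^ 4) ∂gaussVec d 1 := by
        rw [← integral_const_mul]
        exact integral_mono (((PolyGrowth.l2Norm hV).integrable ()).const_mul _)
          (((PolyGrowth.dotProduct (fun i => .const (e i)) hV).add
            ((PolyGrowth.const _).mul hpow)).integrable ()) (H.l2Norm_velocity_le hm hΔ)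
    _ = β * (e ⬝ᵥ (e + h • m)) + 1058 * Q ^ 8 * h * l2Norm e ^ 2 * G := by
        rw [integral_add ((PolyGrowth.dotProduct (fun i => .const (e i)) hV).integrable ())
          (((PolyGrowth.const _).mul hpow).integrable ()), integral_dotProduct_velocity,
          integral_const_mul]
    _ ≤ (1 + Q * h) * ((1 + Q * h) * l2Norm e ^ 2) + 1058 * Q ^ 8 * h * l2Norm e ^ 2 * G :=
        add_le_add_left (H.mul_dotProduct_le hm) _
    _ ≤ l2Norm e * ((1 + (2 * Q + Q ^ 3 + 1058 * Q ^ 8 * G) * h) * l2Norm e) := by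
        have hh := H.pos
        have hQh : Q ^ 2 * h * h ≤ Q ^ 2 * h * Q := by gcongr; exact H.le
        nlinarith [mul_le_mul_of_nonneg_right hQh (sq_nonneg (l2Norm e))]

end Velocity

section MatrixPath

variable {d : ℕ}

lemma hasDerivAt_matrix_mul {A B : ℝ → Mat d} {A' B' : Mat d} {s : ℝ} (hA : HasDerivAt A A' s)
    (hB : HasDerivAt B B' s) : HasDerivAt (fun s => A s * B s) (A' * B s + A s * B') s := by
  refine hasDerivAt_pi.2 fun i => hasDerivAt_pi.2 fun j => ?_
  have := HasDerivAt.fun_sum (u := Finset.univ) fun k _ =>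
    (hasDerivAt_pi.1 (hasDerivAt_pi.1 hA i) k).fun_mul (hasDerivAt_pi.1 (hasDerivAt_pi.1 hB k) j)
  simpa only [Matrix.mul_apply, Matrix.add_apply, Finset.sum_add_distrib] using this

lemma continuousAt_inv_add_smul {S Δ : Mat d} {s : ℝ} (hs : IsUnit (S + s • Δ).det) :
    ContinuousAt (fun r : ℝ => (S + r • Δ)⁻¹) s := by
  have hinv : ContinuousAt Ring.inverse (S + s • Δ).det := by
    simpa only [Ring.inverse_eq_inv'] using continuousAt_inv₀ hs.ne_zero
  exact (continuousAt_matrix_inv _ hinv).comp (f := fun r : ℝ => S + r • Δ) (by fun_prop)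

lemma hasDerivAt_inv_add_smul {S Δ : Mat d} {s : ℝ} (hs : IsUnit (S + s • Δ).det) :
    HasDerivAt (fun r : ℝ => (S + r • Δ)⁻¹) (-((S + s • Δ)⁻¹ * Δ * (S + s • Δ)⁻¹)) s := by
  have hcont := continuousAt_inv_add_smul hs
  have hunit : ∀ᶠ r : ℝ in nhds s, (S + r • Δ).det ≠ 0 :=
    (by fun_prop : Continuous fun r : ℝ => (S + r • Δ).det).continuousAt.eventually_ne hs.ne_zero
  have hlim : Filter.Tendsto (fun r : ℝ => -((S + r • Δ)⁻¹ * Δ * (S + s • Δ)⁻¹)) (nhds s)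
      (nhds (-((S + s • Δ)⁻¹ * Δ * (S + s • Δ)⁻¹))) :=
    ((hcont.mul continuousAt_const).mul continuousAt_const).neg
  refine hasDerivAt_iff_tendsto_slope.2 ((hlim.mono_left nhdsWithin_le_nhds).congr' ?_)
  filter_upwards [nhdsWithin_le_nhds hunit, self_mem_nhdsWithin] with r hr hrs
  have hdiff : (S + r • Δ)⁻¹ - (S + s • Δ)⁻¹
      = (r - s) • -((S + r • Δ)⁻¹ * Δ * (S + s • Δ)⁻¹) :=
    calc (S + r • Δ)⁻¹ - (S + s • Δ)⁻¹
        = (S + r • Δ)⁻¹ * ((S + s • Δ) - (S + r • Δ)) * (S + s • Δ)⁻¹ := by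
          rw [mul_sub, sub_mul, Matrix.mul_assoc, mul_nonsing_inv _ hs,
            nonsing_inv_mul _ (isUnit_iff_ne_zero.2 hr), Matrix.mul_one, Matrix.one_mul]
      _ = _ := by
          rw [add_sub_add_left_eq_sub, ← sub_smul, Matrix.mul_smul, Matrix.smul_mul, ← neg_sub r s,
            neg_smul, smul_neg]
  rw [slope_def_module, hdiff, inv_smul_smul₀ (sub_ne_zero.2 hrs)]

lemma hasDerivAt_quadWeight {β : ℝ} {b : ℝ → Vec d} {B : ℝ → Mat d} {b' : Vec d} {B' : Mat d}
    {s : ℝ} (hb : HasDerivAt b b' s) (hB : HasDerivAt B B' s) (z : Vec d) :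
    HasDerivAt (fun s => quadWeight β (b s) (B s) z) (quadWeight 0 b' B' z) s := by
  let ℓ : Vec d →ₗ[ℝ] ℝ := dotProductBilin ℝ ℝ z
  let q : Mat d →ₗ[ℝ] ℝ :=
    { toFun := fun A => z ⬝ᵥ A *ᵥ z - A.trace
      map_add' := fun A A' => by simp only [add_mulVec, dotProduct_add, trace_add]; ring
      map_smul' := fun r A => by
        simp only [smul_mulVec, dotProduct_smul, trace_smul, smul_eq_mul, RingHom.id_apply]; ring }
  have hℓ : HasDerivAt (fun s => b s ⬝ᵥ z) (b' ⬝ᵥ z) s := by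
    simp only [dotProduct_comm _ z]
    exact ℓ.toContinuousLinearMap.hasFDerivAt.comp_hasDerivAt s hb
  have hq : HasDerivAt (fun s => z ⬝ᵥ B s *ᵥ z - (B s).trace) (z ⬝ᵥ B' *ᵥ z - B'.trace) s :=
    q.toContinuousLinearMap.hasFDerivAt.comp_hasDerivAt s hB
  simpa only [quadWeight, zero_add] using (hℓ.const_add β).fun_add hq

end MatrixPath

/-! ### Linearised one-step operators -/

section Derivative

variable {d : ℕ}

/-- `D` is the derivative of `φ`, with `|φ| ≤ M`, `|D| ≤ L` and `D` being `K`-Lipschitz, all in the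
Euclidean norm. -/
structure HasC11Bounds (φ : Vec d → ℝ) (D : Vec d → Vec d →L[ℝ] ℝ) (M L K : ℝ) : Prop where
  hasFDerivAt : ∀ x, HasFDerivAt φ (D x) x
  abs_le : ∀ x, |φ x| ≤ M
  abs_fderiv_le : ∀ x v, |D x v| ≤ L * l2Norm v
  abs_fderiv_sub_le : ∀ x y v, |D x v - D y v| ≤ K * l2Norm (x - y) * l2Norm v

/-- The linearised one-step operator with mean `c` and volatility `S`: for smooth `ψ` it is the
expectation of `β ψ + p · Dψ + Tr (Γ D²ψ)` at `c + S z`, with all derivatives of `ψ` moved to the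
Gaussian weight. -/
def linMean (ψ : Vec d → ℝ) (β : ℝ) (p : Vec d) (Γ : Mat d) (c : Vec d) (S : Mat d) : ℝ :=
  ∫ z, ψ (c + S *ᵥ z) * quadWeight β (S⁻¹ *ᵥ p) (S⁻¹ * Γ * S⁻¹ᵀ) z ∂gaussVec d 1

variable {φ : Vec d → ℝ} {D : Vec d → Vec d →L[ℝ] ℝ} {M L K : ℝ}

namespace HasC11Bounds

lemma continuous (hφ : HasC11Bounds φ D M L K) : Continuous φ :=
  continuous_iff_continuousAt.2 fun x => (hφ.hasFDerivAt x).continuousAt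

lemma continuous_fderiv (hφ : HasC11Bounds φ D M L K) (v : Vec d) : Continuous fun x => D x v := by
  refine continuous_iff_continuousAt.2 fun x => tendsto_iff_norm_sub_tendsto_zero.2 ?_
  have hlim : Filter.Tendsto (fun y => K * l2Norm (y - x) * l2Norm v) (nhds x) (nhds 0) := by
    have hcont : Continuous fun y => K * l2Norm (y - x) * l2Norm v :=
      ((continuous_l2Norm.comp (continuous_id.sub continuous_const)).const_mul K).mul_const _
    simpa using hcont.tendsto x
  exact squeeze_zero (fun y => norm_nonneg _) (fun y => hφ.abs_fderiv_sub_le y x v) hlim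

lemma polyGrowth_comp {α : Type*} (hφ : HasC11Bounds φ D M L K) {X : α → Vec d → Vec d}
    (hX : ∀ a, Continuous (X a)) : PolyGrowth fun a z => φ (X a z) :=
  .of_bounded (fun a => hφ.continuous.comp (hX a)) fun _ _ => hφ.abs_le _

lemma polyGrowth_fderiv_comp {α : Type*} (hφ : HasC11Bounds φ D M L K) {X v : α → Vec d → Vec d}
    (hX : ∀ a, Continuous (X a)) (hv : ∀ i, PolyGrowth fun a z => v a z i) :
    PolyGrowth fun a z => D (X a z) (v a z) := by
  have hexp : ∀ x u, D x u = ∑ i, u i * D x (Pi.single i 1) := fun x u => by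
    conv_lhs => rw [pi_eq_sum_univ' u]
    simp only [map_sum, map_smul, smul_eq_mul]
  simp_rw [hexp _ (v _ _)]
  exact .sum fun i => (hv i).mul (.of_bounded
    (fun a => (hφ.continuous_fderiv _).comp (hX a)) fun a z => hφ.abs_fderiv_le _ _)

/-- Stein's identity turns the derivative of the weight into a derivative of the test function. -/
lemma integral_mul_quadWeight_eq (hφ : HasC11Bounds φ D M L K) (c : Vec d) (S N : Mat d)
    (b : Vec d) {B : Mat d} (hB : Bᵀ = B) :
    ∫ z, φ (c + S *ᵥ z) * quadWeight 0 (-(N *ᵥ b)) (-(N * B + B * Nᵀ)) z ∂gaussVec d 1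
      = -∫ z, D (c + S *ᵥ z) ((S * N) *ᵥ (b + (2 : ℝ) • B *ᵥ z)) ∂gaussVec d 1 := by
  have hX : Continuous fun z : Vec d => c + S *ᵥ z := by fun_prop
  let A : Vec d →L[ℝ] Vec d := S.mulVecLin.toContinuousLinearMap
  have hstein := integral_mul_affine_eq_integral_fderiv (Ψ := fun z => φ (c + S *ᵥ z))
    (DΨ := fun z => (D (c + S *ᵥ z)).comp A)
    (fun z => (hφ.hasFDerivAt _).comp z ((A.hasFDerivAt (x := z)).const_add c))
    (hφ.polyGrowth_comp fun _ => hX)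
    (fun i => hφ.polyGrowth_fderiv_comp (fun _ => hX) fun _ => .const _)
    (N *ᵥ b) ((2 : ℝ) • (N * B))
  have hright : ∀ z, (D (c + S *ᵥ z)).comp A (N *ᵥ b + ((2 : ℝ) • (N * B)) *ᵥ z)
      = D (c + S *ᵥ z) ((S * N) *ᵥ (b + (2 : ℝ) • B *ᵥ z)) := fun z => by
    simp [A, mulVec_add, mulVec_smul, smul_mulVec, Matrix.mul_assoc]
  simp only [hright] at hstein
  rw [← hstein, ← integral_neg]
  refine integral_congr_ae (.of_forall fun z => ?_)
  have htrace : (B * Nᵀ).trace = (N * B).trace := by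
    rw [← trace_transpose, transpose_mul, transpose_transpose, hB]
  have hsymm : z ⬝ᵥ B *ᵥ (Nᵀ *ᵥ z) = z ⬝ᵥ N *ᵥ (B *ᵥ z) := by
    rw [dotProduct_mulVec, ← mulVec_transpose, hB, mulVec_transpose, dotProduct_comm,
      ← dotProduct_mulVec]
  simp only [quadWeight, neg_mulVec, add_mulVec, smul_mulVec, dotProduct_neg, neg_dotProduct,
    dotProduct_add, dotProduct_smul, trace_neg, trace_add, trace_smul, smul_eq_mul, htrace,
    ← mulVec_mulVec, hsymm, dotProduct_comm z (N *ᵥ b)]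
  ring

lemma integral_fderiv_mul_add_eq_integral_velocity (hφ : HasC11Bounds φ D M L K) (β : ℝ)
    (c c' b : Vec d) (S N : Mat d) {B : Mat d} (hB : Bᵀ = B) :
    ∫ z, (D (c + S *ᵥ z) (c' + (S * N) *ᵥ z) * quadWeight β b B z
        + φ (c + S *ᵥ z) * quadWeight 0 (-(N *ᵥ b)) (-(N * B + B * Nᵀ)) z) ∂gaussVec d 1
      = ∫ z, D (c + S *ᵥ z) (velocity β b B c' (S * N) z) ∂gaussVec d 1 := by
  have hX : Continuous fun z : Vec d => c + S *ᵥ z := by fun_prop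
  have hmove : PolyGrowth fun (_ : Unit) z =>
      D (c + S *ᵥ z) (c' + (S * N) *ᵥ z) * quadWeight β b B z :=
    (hφ.polyGrowth_fderiv_comp (fun _ => hX) fun i =>
      (PolyGrowth.const _).add (polyGrowth_mulVec (S * N) i)).mul (polyGrowth_quadWeight β b B)
  have hgrad : PolyGrowth fun (_ : Unit) z =>
      D (c + S *ᵥ z) ((S * N) *ᵥ (b + (2 : ℝ) • B *ᵥ z)) :=
    hφ.polyGrowth_fderiv_comp (fun _ => hX) fun i => .dotProduct (fun j => .const _)
      fun j => (PolyGrowth.const _).add ((PolyGrowth.const 2).mul (polyGrowth_mulVec B j))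
  rw [integral_add (hmove.integrable ())
      (((hφ.polyGrowth_comp fun _ => hX).mul (polyGrowth_quadWeight _ _ _)).integrable ()),
    hφ.integral_mul_quadWeight_eq _ _ _ _ hB, ← sub_eq_add_neg,
    ← integral_sub (hmove.integrable ()) (hgrad.integrable ())]
  simp only [velocity, map_sub, map_smul, smul_eq_mul, mul_comm]

end HasC11Bounds

lemma PolyGrowth.of_continuousOn {I : Set ℝ} (hI : IsCompact I) {u : ℝ → ℝ}
    (hu : ContinuousOn u I) : PolyGrowth fun (r : I) (_ : Vec d) => u r := by
  obtain ⟨C, hC⟩ := hI.exists_bound_of_continuousOn hu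
  exact .of_bounded (fun _ => continuous_const) fun r _ => hC r r.2

lemma hasDerivAt_integral_of_polyGrowth {I : Set ℝ} {s : ℝ} (hI : I ∈ nhds s)
    {f f' : ℝ → Vec d → ℝ} (hf : PolyGrowth fun r : I => f r) (hf' : PolyGrowth fun r : I => f' r)
    (hderiv : ∀ r ∈ I, ∀ z, HasDerivAt (f · z) (f' r z) r) :
    HasDerivAt (fun r => ∫ z, f r z ∂gaussVec d 1) (∫ z, f' s z ∂gaussVec d 1) s := by
  let s₀ : I := ⟨s, mem_of_mem_nhds hI⟩
  obtain ⟨C, -, k, hk⟩ := hf'.bound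
  refine (hasDerivAt_integral_of_dominated_loc_of_deriv_le hI ?_ (hf.integrable s₀)
    (hf'.continuous s₀).aestronglyMeasurable (.of_forall fun z r hr => hk ⟨r, hr⟩ z)
    ((integrable_one_add_norm_pow d k).const_mul C) (.of_forall fun z r hr => hderiv r hr z)).2
  filter_upwards [hI] with r hr using (hf.continuous ⟨r, hr⟩).aestronglyMeasurable

variable {S Δ : Mat d} {s : ℝ}

lemma hasDerivAt_inv_mulVec (hs : IsUnit (S + s • Δ).det) (p : Vec d) :
    HasDerivAt (fun r : ℝ => (S + r • Δ)⁻¹ *ᵥ p)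
      (-(((S + s • Δ)⁻¹ * Δ) *ᵥ ((S + s • Δ)⁻¹ *ᵥ p))) s := by
  have := ((mulVecBilin ℝ ℝ).flip p).toContinuousLinearMap.hasFDerivAt.comp_hasDerivAt s
    (hasDerivAt_inv_add_smul hs)
  refine this.congr_deriv (?_ : -((S + s • Δ)⁻¹ * Δ * (S + s • Δ)⁻¹) *ᵥ p = _)
  rw [neg_mulVec, mulVec_mulVec]

lemma hasDerivAt_inv_conj (hs : IsUnit (S + s • Δ).det) (Γ : Mat d) :
    HasDerivAt (fun r : ℝ => (S + r • Δ)⁻¹ * Γ * (S + r • Δ)⁻¹ᵀ)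
      (-((S + s • Δ)⁻¹ * Δ * ((S + s • Δ)⁻¹ * Γ * (S + s • Δ)⁻¹ᵀ)
        + (S + s • Δ)⁻¹ * Γ * (S + s • Δ)⁻¹ᵀ * ((S + s • Δ)⁻¹ * Δ)ᵀ)) s := by
  have hR := hasDerivAt_inv_add_smul hs
  have hRt : HasDerivAt (fun r : ℝ => (S + r • Δ)⁻¹ᵀ)
      (-((S + s • Δ)⁻¹ * Δ * (S + s • Δ)⁻¹))ᵀ s :=
    hasDerivAt_pi.2 fun i => hasDerivAt_pi.2 fun j => hasDerivAt_pi.1 (hasDerivAt_pi.1 hR j) i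
  refine (hasDerivAt_matrix_mul (hasDerivAt_matrix_mul hR (hasDerivAt_const s Γ))
    hRt).congr_deriv ?_
  simp only [transpose_neg, transpose_mul, Matrix.mul_assoc, Matrix.mul_neg, Matrix.neg_mul,
    Matrix.mul_zero, add_zero, neg_add]

/-- By Stein's identity, the derivative along an affine path involves only the first derivative of
the test function. -/
lemma HasC11Bounds.hasDerivAt_linMean (hφ : HasC11Bounds φ D M L K) (β : ℝ) (p c c' : Vec d)
    {Γ : Mat d} (hΓ : Γᵀ = Γ) (hs : IsUnit (S + s • Δ).det) :
    HasDerivAt (fun r : ℝ => linMean φ β p Γ (c + r • c') (S + r • Δ))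
      (∫ z, D (c + s • c' + (S + s • Δ) *ᵥ z) (velocity β ((S + s • Δ)⁻¹ *ᵥ p)
        ((S + s • Δ)⁻¹ * Γ * (S + s • Δ)⁻¹ᵀ) c' Δ z) ∂gaussVec d 1) s := by
  obtain ⟨I, hsI, hunit, hI⟩ := local_compact_nhds
    ((isOpen_ne_fun (by fun_prop : Continuous fun r : ℝ => (S + r • Δ).det)
      continuous_const).mem_nhds hs.ne_zero)
  replace hunit : ∀ r ∈ I, IsUnit (S + r • Δ).det := fun r hr => isUnit_iff_ne_zero.2 (hunit hr)
  set X : ℝ → Vec d → Vec d := fun r z => c + r • c' + (S + r • Δ) *ᵥ z with hX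
  set N : ℝ → Mat d := fun r => (S + r • Δ)⁻¹ * Δ
  set b : ℝ → Vec d := fun r => (S + r • Δ)⁻¹ *ᵥ p
  set B : ℝ → Mat d := fun r => (S + r • Δ)⁻¹ * Γ * (S + r • Δ)⁻¹ᵀ with hB
  have hcoeff : ∀ {u : Mat d → ℝ}, Continuous u →
      PolyGrowth fun (r : I) (_ : Vec d) => u (S + (r : ℝ) • Δ)⁻¹ := fun {u} hu =>
    .of_continuousOn (u := fun r => u (S + r • Δ)⁻¹) hI (hu.comp_continuousOn fun r hr =>
      (continuousAt_inv_add_smul (hunit r hr)).continuousWithinAt)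
  have hw : PolyGrowth fun r : I => quadWeight β (b r) (B r) :=
    .quadWeight β (fun i => hcoeff (u := fun R => (R *ᵥ p) i) (by fun_prop))
      fun i j => hcoeff (u := fun R => (R * Γ * Rᵀ) i j) (by fun_prop)
  have hw' : PolyGrowth fun r : I =>
      quadWeight 0 (-(N r *ᵥ b r)) (-(N r * B r + B r * (N r)ᵀ)) :=
    .quadWeight 0 (fun i => hcoeff (u := fun R => (-((R * Δ) *ᵥ (R *ᵥ p))) i) (by fun_prop))
      fun i j => hcoeff (u := fun R => (-(R * Δ * (R * Γ * Rᵀ) + R * Γ * Rᵀ * (R * Δ)ᵀ)) i j)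
        (by fun_prop)
  have hXcont : ∀ r, Continuous (X r) := fun r => by fun_prop
  have hX' : ∀ r z, HasDerivAt (X · z) (c' + Δ *ᵥ z) r := fun r z => by
    have := ((hasDerivAt_id r).smul_const c').const_add c |>.fun_add
      (((hasDerivAt_id r).smul_const (Δ *ᵥ z)).const_add (S *ᵥ z))
    simpa [hX, add_mulVec, smul_mulVec] using this
  have hDX : PolyGrowth fun (r : I) z => D (X r z) (c' + Δ *ᵥ z) :=
    hφ.polyGrowth_fderiv_comp (fun r => hXcont r) fun i =>
      (PolyGrowth.const _).add (polyGrowth_mulVec Δ i)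
  have hφX : PolyGrowth fun (r : I) z => φ (X r z) := hφ.polyGrowth_comp fun r => hXcont r
  refine (hasDerivAt_integral_of_polyGrowth hsI (hφX.mul hw) ((hDX.mul hw).add (hφX.mul hw'))
    fun r hr z => ((hφ.hasFDerivAt _).comp_hasDerivAt r (hX' r z)).mul
      (hasDerivAt_quadWeight (hasDerivAt_inv_mulVec (hunit r hr) p)
        (hasDerivAt_inv_conj (hunit r hr) Γ) z)).congr_deriv ?_
  have hBs : (B s)ᵀ = B s := by
    simp only [hB, transpose_mul, transpose_transpose, hΓ, Matrix.mul_assoc]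
  have hvel := hφ.integral_fderiv_mul_add_eq_integral_velocity β (c + s • c') c' (b s)
    (S + s • Δ) (N s) hBs
  rwa [mul_nonsing_inv_cancel_left _ _ hs] at hvel

end Derivative

section Perturbation

variable {d : ℕ}

lemma isUnit_det_one_add {N : Mat d} {ε : ℝ} (hN : l2OpNorm N ≤ ε) (hε : ε < 1) :
    IsUnit (1 + N).det := by
  rw [← isUnit_iff_isUnit_det, ← mulVec_injective_iff_isUnit]
  refine (injective_iff_map_eq_zero (1 + N).mulVecLin).2 fun v hv => ?_
  have hNv : v = -(N *ᵥ v) := by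
    simpa [add_mulVec, ← eq_neg_iff_add_eq_zero] using hv
  have hle : l2Norm v ≤ ε * l2Norm v := by
    conv_lhs => rw [hNv, ← neg_one_smul ℝ, l2Norm_smul, abs_neg, abs_one, one_mul]
    exact (l2Norm_mulVec_le N v).trans (mul_le_mul_of_nonneg_right hN (l2Norm_nonneg v))
  exact l2Norm_eq_zero.1 (by nlinarith [l2Norm_nonneg v])

lemma l2OpNorm_inv_one_add_le {N : Mat d} {ε : ℝ} (hN : l2OpNorm N ≤ ε) (hε : ε ≤ 1 / 2) :
    l2OpNorm (1 + N)⁻¹ ≤ 1 + 2 * ε := by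
  have hε0 : 0 ≤ ε := (l2OpNorm_nonneg N).trans hN
  refine l2OpNorm_le_of_forall (by positivity) fun w => ?_
  set v := (1 + N)⁻¹ *ᵥ w
  have hv : v = w - N *ᵥ v := by
    rw [eq_sub_iff_add_eq]
    calc v + N *ᵥ v = ((1 + N) * (1 + N)⁻¹) *ᵥ w := by rw [← mulVec_mulVec, add_mulVec, one_mulVec]
      _ = w := by rw [mul_nonsing_inv _ (isUnit_det_one_add hN (by linarith)), one_mulVec]
  have hle : l2Norm v ≤ l2Norm w + ε * l2Norm v := by
    conv_lhs => rw [hv]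
    exact (l2Norm_sub_le _ _).trans (add_le_add_right ((l2Norm_mulVec_le N v).trans
      (mul_le_mul_of_nonneg_right hN (l2Norm_nonneg v))) _)
  nlinarith [mul_le_mul_of_nonneg_left hle hε0, l2Norm_nonneg v, l2Norm_nonneg w,
    mul_nonneg hε0 (l2Norm_nonneg w)]

variable {Q h β ε : ℝ} {p : Vec d} {Γ S Δ : Mat d}

lemma isUnit_det_add (hS : IsUnit S.det) (hΔ : l2OpNorm (S⁻¹ * Δ) ≤ ε) (hε : ε < 1) :
    IsUnit (S + Δ).det := by
  have := hS.mul (isUnit_det_one_add hΔ hε)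
  rwa [← det_mul, mul_add, Matrix.mul_one, mul_nonsing_inv_cancel_left _ _ hS] at this

lemma Admissible.add_volatility (H : Admissible Q h β (S⁻¹ *ᵥ p) (S⁻¹ * Γ * S⁻¹ᵀ))
    (hS : IsUnit S.det) (hΔ : l2OpNorm (S⁻¹ * Δ) ≤ ε) (hε : ε ≤ 1 / 2) (hεh : 2 * ε ≤ h) :
    Admissible (7 * Q) h β ((S + Δ)⁻¹ *ᵥ p) ((S + Δ)⁻¹ * Γ * (S + Δ)⁻¹ᵀ) := by
  have hinv : (S + Δ)⁻¹ = (1 + S⁻¹ * Δ)⁻¹ * S⁻¹ := by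
    rw [← Matrix.mul_inv_rev, mul_add, Matrix.mul_one, mul_nonsing_inv_cancel_left _ _ hS]
  rw [hinv, transpose_mul, ← mulVec_mulVec]
  simpa only [Matrix.mul_assoc] using
    H.conj (l2OpNorm_inv_one_add_le hΔ hε) (by linarith) hεh

lemma inv_smul_matrix {k : ℝ} (hk : k ≠ 0) {A : Mat d} (hA : IsUnit A.det) :
    (k • A)⁻¹ = k⁻¹ • A⁻¹ :=
  Matrix.inv_eq_left_inv (by simp [smul_smul, hk, nonsing_inv_mul A hA])

/-- The mean value inequality along the affine path from `(c, √h σ)` to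
`(c + e + h m, √h (σ + Δ))`. -/
lemma exists_abs_linMean_sub_le (d : ℕ) (Q : ℝ) :
    ∃ C ≥ 0, ∀ {φ : Vec d → ℝ} {D : Vec d → Vec d →L[ℝ] ℝ} {M L K h β ε : ℝ} {p c e m : Vec d}
      {Γ σ Δ : Mat d}, HasC11Bounds φ D M L K → Γᵀ = Γ → IsUnit σ.det →
      Admissible Q h β ((√h • σ)⁻¹ *ᵥ p) ((√h • σ)⁻¹ * Γ * (√h • σ)⁻¹ᵀ) → e ≠ 0 →
      l2Norm m ≤ Q * l2Norm e → l2OpNorm Δ ≤ Q * l2Norm e →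
      l2OpNorm (σ⁻¹ * Δ) ≤ ε → ε ≤ 1 / 2 → 2 * ε ≤ h → 0 ≤ L →
      |linMean φ β p Γ (c + (e + h • m)) (√h • (σ + Δ)) - linMean φ β p Γ c (√h • σ)|
        ≤ (1 + C * h) * L * l2Norm e := by
  obtain ⟨C, hC, hvel⟩ := exists_integral_l2Norm_velocity_le d (7 * Q)
  refine ⟨C, hC, fun {φ D M L K h β ε p c e m Γ σ Δ} hφ hΓ hσ H he hm hΔ hN hε hεh hL => ?_⟩
  have hQ := H.one_le
  have hsqrt : √h ≠ 0 := (Real.sqrt_pos.2 H.pos).ne'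
  have hS : IsUnit (√h • σ).det := by
    rw [det_smul]; exact ((isUnit_iff_ne_zero.2 hsqrt).pow _).mul hσ
  have hNs : ∀ s ∈ Icc (0 : ℝ) 1, l2OpNorm ((√h • σ)⁻¹ * (s • √h • Δ)) ≤ ε := fun s hs => by
    have : (√h • σ)⁻¹ * (s • √h • Δ) = s • (σ⁻¹ * Δ) := by
      rw [inv_smul_matrix hsqrt hσ, Matrix.mul_smul, smul_mul_smul_comm, inv_mul_cancel₀ hsqrt,
        one_smul]
    rw [this, l2OpNorm_smul, abs_of_nonneg hs.1]
    nlinarith [hs.2, l2OpNorm_nonneg (σ⁻¹ * Δ)]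
  have hderiv : ∀ s ∈ Icc (0 : ℝ) 1, _ := fun s hs => hφ.hasDerivAt_linMean β p c (e + h • m) hΓ
    (isUnit_det_add hS (hNs s hs) (by linarith))
  have hbound := norm_image_sub_le_of_norm_deriv_le_segment_01' (C := (1 + C * h) * L * l2Norm e)
    (fun s hs => (hderiv s hs).hasDerivWithinAt) fun s hs => ?_
  · simpa [smul_add] using hbound
  have hs' : s ∈ Icc (0 : ℝ) 1 := Ico_subset_Icc_self hs
  set S : Mat d := √h • σ + s • √h • Δ
  set V := velocity β (S⁻¹ *ᵥ p) (S⁻¹ * Γ * S⁻¹ᵀ) (e + h • m) (√h • Δ)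
  have hV := PolyGrowth.l2Norm fun i =>
    polyGrowth_velocity (α := Unit) β (S⁻¹ *ᵥ p) (S⁻¹ * Γ * S⁻¹ᵀ) (e + h • m) (√h • Δ) i
  have he0 := l2Norm_nonneg e
  calc ‖∫ z, D (c + s • (e + h • m) + S *ᵥ z) (V z) ∂gaussVec d 1‖
      ≤ ∫ z, L * l2Norm (V z) ∂gaussVec d 1 := norm_integral_le_of_norm_le
        ((hV.integrable ()).const_mul L) (.of_forall fun z => hφ.abs_fderiv_le _ _)
    _ ≤ L * ((1 + C * h) * l2Norm e) := by
        rw [integral_const_mul]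
        exact mul_le_mul_of_nonneg_left (hvel h β _ e m _ Δ
          (H.add_volatility hS (hNs s hs') hε hεh) he (by nlinarith) (by nlinarith)) hL
    _ = (1 + C * h) * L * l2Norm e := by ring

end Perturbation

/-! ### The Euler step and its coefficients -/

section Step

variable {d : ℕ}

/-- The expectation of `ψ` at the endpoint of one Euler step. -/
def eulerMean (μ : ℝ → Vec d → Vec d) (σ : ℝ → Vec d → Mat d) (h t : ℝ) (ψ : Vec d → ℝ)
    (x : Vec d) : ℝ :=
  ∫ w, ψ (euler μ σ h t x w) ∂gaussVec d h

/-- The `H₁`-weighted expectation, which approximates the gradient of `ψ`. -/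
def eulerGrad (μ : ℝ → Vec d → Vec d) (σ : ℝ → Vec d → Mat d) (h t : ℝ) (ψ : Vec d → ℝ)
    (x : Vec d) : Vec d :=
  fun i => ∫ w, ψ (euler μ σ h t x w) * H1w σ h t x w i ∂gaussVec d h

/-- The `H₂`-weighted expectation, which approximates the Hessian of `ψ`. -/
def eulerHess (μ : ℝ → Vec d → Vec d) (σ : ℝ → Vec d → Mat d) (h t : ℝ) (ψ : Vec d → ℝ)
    (x : Vec d) : Mat d :=
  Matrix.of fun i j => ∫ w, ψ (euler μ σ h t x w) * H2w σ h t x w i j ∂gaussVec d h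

/-- One step of the scheme with the nonlinearity replaced by
`(a, b, C) ↦ r a + p · b + Tr (Γ C)`. -/
def linStep (μ : ℝ → Vec d → Vec d) (σ : ℝ → Vec d → Mat d) (h t r : ℝ) (p : Vec d) (Γ : Mat d)
    (ψ : Vec d → ℝ) (x : Vec d) : ℝ :=
  linMean ψ (1 + h * r) (h • p) (h • Γ) (x + h • μ t x) (√h • σ t x)

variable {μ : ℝ → Vec d → Vec d} {σ : ℝ → Vec d → Mat d} {h t : ℝ} {x : Vec d}

lemma step_eq (F : ℝ → Vec d → ℝ → Vec d → Mat d → ℝ) (ψ : Vec d → ℝ) :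
    step F μ σ h t ψ x = eulerMean μ σ h t ψ x
      + h * F t x (eulerMean μ σ h t ψ x) (eulerGrad μ σ h t ψ x) (eulerHess μ σ h t ψ x) :=
  rfl

lemma euler_sqrt_smul (z : Vec d) :
    euler μ σ h t x (√h • z) = x + h • μ t x + (√h • σ t x) *ᵥ z := by
  rw [euler, mulVec_smul, smul_mulVec]

lemma H1w_sqrt_smul (hh : 0 < h) (hσ : IsUnit (σ t x).det) (z : Vec d) :
    H1w σ h t x (√h • z) = (√h • σ t x)⁻¹ᵀ *ᵥ z := by
  have hsqrt : √h ≠ 0 := (Real.sqrt_pos.2 hh).ne'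
  rw [H1w, inv_smul_matrix hsqrt hσ, transpose_smul, smul_mulVec, mulVec_smul, smul_smul,
    transpose_nonsing_inv, one_div, ← Real.sqrt_div_self, div_eq_inv_mul]

lemma H2w_sqrt_smul (hh : 0 < h) (hσ : IsUnit (σ t x).det) (z : Vec d) :
    H2w σ h t x (√h • z) = (√h • σ t x)⁻¹ᵀ * (vecMulVec z z - 1) * (√h • σ t x)⁻¹ := by
  have hsqrt : √h ≠ 0 := (Real.sqrt_pos.2 hh).ne'
  have hcov : vecMulVec (√h • z) (√h • z) - h • (1 : Mat d) = h • (vecMulVec z z - 1) := by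
    rw [smul_vecMulVec, vecMulVec_smul, smul_smul, Real.mul_self_sqrt hh.le, smul_sub]
  have hscale : 1 / h ^ 2 * h = (√h)⁻¹ * (√h)⁻¹ := by
    rw [← mul_inv, Real.mul_self_sqrt hh.le]
    field_simp
  rw [H2w, hcov, inv_smul_matrix hsqrt hσ, transpose_smul, transpose_nonsing_inv]
  simp only [Matrix.smul_mul, Matrix.mul_smul, smul_smul, hscale]

lemma sum_mul_conj_eq (Γ R : Mat d) (z : Vec d) :
    ∑ i, ∑ j, Γ i j * (Rᵀ * (vecMulVec z z - 1) * R) i j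
      = z ⬝ᵥ (R * Γ * Rᵀ) *ᵥ z - (R * Γ * Rᵀ).trace := by
  set A := Rᵀ * (vecMulVec z z - 1) * R with hA
  have hsymm : Aᵀ = A := by
    simp only [hA, transpose_mul, transpose_transpose, transpose_sub, transpose_one,
      transpose_vecMulVec, Matrix.mul_assoc]
  calc ∑ i, ∑ j, Γ i j * A i j = (Γ * Aᵀ).trace := by simp [Matrix.trace, Matrix.mul_apply]
    _ = (R * Γ * Rᵀ * (vecMulVec z z - 1)).trace := by
        rw [hsymm, hA, ← Matrix.mul_assoc, trace_mul_comm]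
        simp only [Matrix.mul_assoc]
    _ = z ⬝ᵥ (R * Γ * Rᵀ) *ᵥ z - (R * Γ * Rᵀ).trace := by
        rw [Matrix.mul_sub, Matrix.mul_one, trace_sub, mul_vecMulVec, trace_vecMulVec,
          dotProduct_comm]

lemma quadWeight_eq (hh : 0 < h) (hσ : IsUnit (σ t x).det) (r : ℝ) (p : Vec d) (Γ : Mat d)
    (z : Vec d) :
    quadWeight (1 + h * r) ((√h • σ t x)⁻¹ *ᵥ (h • p))
        ((√h • σ t x)⁻¹ * (h • Γ) * (√h • σ t x)⁻¹ᵀ) z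
      = 1 + h * (r + p ⬝ᵥ H1w σ h t x (√h • z)
        + ∑ i, ∑ j, Γ i j * H2w σ h t x (√h • z) i j) := by
  rw [H1w_sqrt_smul hh hσ, H2w_sqrt_smul hh hσ, sum_mul_conj_eq, quadWeight, mulVec_smul,
    smul_dotProduct, Matrix.mul_smul, Matrix.smul_mul, smul_mulVec, dotProduct_smul, trace_smul,
    dotProduct_comm, dotProduct_mulVec, ← mulVec_transpose, dotProduct_comm p]
  simp only [smul_eq_mul]
  ring

lemma polyGrowth_H1w {α : Type*} (i : Fin d) :
    PolyGrowth fun (_ : α) z => H1w σ h t x (√h • z) i :=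
  (PolyGrowth.const (1 / h)).mul (.dotProduct (fun _ => .const _) fun j =>
    (PolyGrowth.const √h).mul (.coord j))

lemma polyGrowth_H2w {α : Type*} (i j : Fin d) :
    PolyGrowth fun (_ : α) z => H2w σ h t x (√h • z) i j :=
  (PolyGrowth.const (1 / h ^ 2)).mul (.dotProduct (fun _ => .dotProduct (fun _ => .const _) fun l =>
    (((PolyGrowth.const √h).mul (.coord l)).mul ((PolyGrowth.const √h).mul (.coord _))).sub
      (.const _)) fun _ => .const _)

variable {ψ : Vec d → ℝ}

lemma continuous_euler : Continuous (euler μ σ h t x) := by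
  unfold euler
  fun_prop

lemma continuous_H1w (i : Fin d) : Continuous fun w => H1w σ h t x w i := by
  unfold H1w
  fun_prop

lemma continuous_H2w (i j : Fin d) : Continuous fun w => H2w σ h t x w i j := by
  have : Continuous fun w : Vec d => vecMulVec w w := continuous_id.matrix_vecMulVec continuous_id
  unfold H2w
  fun_prop

lemma integral_linear_combination {u : Vec d → ℝ} {v : Fin d → Vec d → ℝ}
    {w : Fin d → Fin d → Vec d → ℝ} (hu : PolyGrowth fun (_ : Unit) => u)
    (hv : ∀ i, PolyGrowth fun (_ : Unit) => v i) (hw : ∀ i j, PolyGrowth fun (_ : Unit) => w i j)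
    (h r : ℝ) (p : Vec d) (Γ : Mat d) :
    ∫ z, (u z + h * (r * u z + ∑ i, p i * v i z + ∑ i, ∑ j, Γ i j * w i j z)) ∂gaussVec d 1
      = ∫ z, u z ∂gaussVec d 1 + h * (r * ∫ z, u z ∂gaussVec d 1
        + ∑ i, p i * ∫ z, v i z ∂gaussVec d 1
        + ∑ i, ∑ j, Γ i j * ∫ z, w i j z ∂gaussVec d 1) := by
  have hru := (PolyGrowth.const r).mul hu
  have hpv := fun i => (PolyGrowth.const (p i)).mul (hv i)
  have hΓw := fun i j => (PolyGrowth.const (Γ i j)).mul (hw i j)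
  have hΓw' := fun i => PolyGrowth.sum (s := Finset.univ) (hΓw i)
  have hlin := hru.add (.sum (s := Finset.univ) hpv)
  have hall := hlin.add (.sum (s := Finset.univ) hΓw')
  rw [integral_add (hu.integrable ()) ((hall.integrable ()).const_mul h), integral_const_mul,
    integral_add (hlin.integrable ()) ((PolyGrowth.sum hΓw').integrable ()),
    integral_add (hru.integrable ()) ((PolyGrowth.sum hpv).integrable ()), integral_const_mul,
    integral_finsetSum _ fun i _ => (hpv i).integrable (),
    integral_finsetSum _ fun i _ => (hΓw' i).integrable ()]
  simp only [integral_finsetSum _ fun j _ => (hΓw _ j).integrable (), integral_const_mul]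

lemma eulerMean_eq (hh : 0 < h) (hψ : Continuous ψ) :
    eulerMean μ σ h t ψ x = ∫ z, ψ (euler μ σ h t x (√h • z)) ∂gaussVec d 1 :=
  integral_gaussVec hh.le (hψ.comp continuous_euler)

lemma eulerGrad_apply (hh : 0 < h) (hψ : Continuous ψ) (i : Fin d) :
    eulerGrad μ σ h t ψ x i
      = ∫ z, ψ (euler μ σ h t x (√h • z)) * H1w σ h t x (√h • z) i ∂gaussVec d 1 :=
  integral_gaussVec hh.le ((hψ.comp continuous_euler).mul (continuous_H1w i))

lemma eulerHess_apply (hh : 0 < h) (hψ : Continuous ψ) (i j : Fin d) :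
    eulerHess μ σ h t ψ x i j
      = ∫ z, ψ (euler μ σ h t x (√h • z)) * H2w σ h t x (√h • z) i j ∂gaussVec d 1 :=
  integral_gaussVec hh.le ((hψ.comp continuous_euler).mul (continuous_H2w i j))

lemma eulerMean_add_eq_linStep (hh : 0 < h) (hσ : IsUnit (σ t x).det) (hψ : Continuous ψ) {M : ℝ}
    (hM : ∀ y, |ψ y| ≤ M) (r : ℝ) (p : Vec d) (Γ : Mat d) :
    eulerMean μ σ h t ψ x + h * (r * eulerMean μ σ h t ψ x + p ⬝ᵥ eulerGrad μ σ h t ψ x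
        + ∑ i, ∑ j, Γ i j * eulerHess μ σ h t ψ x i j)
      = linStep μ σ h t r p Γ ψ x := by
  have hψX : PolyGrowth fun (_ : Unit) z => ψ (euler μ σ h t x (√h • z)) :=
    .of_bounded (fun _ => hψ.comp (continuous_euler.comp (continuous_const_smul _))) fun _ _ => hM _
  have hpoint : ∀ z, ψ (euler μ σ h t x (√h • z)) * (1 + h * (r + p ⬝ᵥ H1w σ h t x (√h • z)
        + ∑ i, ∑ j, Γ i j * H2w σ h t x (√h • z) i j))
      = ψ (euler μ σ h t x (√h • z)) + h * (r * ψ (euler μ σ h t x (√h • z))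
        + ∑ i, p i * (ψ (euler μ σ h t x (√h • z)) * H1w σ h t x (√h • z) i)
        + ∑ i, ∑ j, Γ i j * (ψ (euler μ σ h t x (√h • z)) * H2w σ h t x (√h • z) i j)) :=
    fun z => by
      simp only [dotProduct, mul_left_comm _ (ψ _), ← Finset.mul_sum]
      ring
  simp only [linStep, linMean, quadWeight_eq hh hσ, ← euler_sqrt_smul, hpoint]
  rw [integral_linear_combination hψX (fun i => hψX.mul (polyGrowth_H1w i))
    (fun i j => hψX.mul (polyGrowth_H2w i j))]
  simp only [dotProduct, eulerMean_eq hh hψ, eulerGrad_apply hh hψ, eulerHess_apply hh hψ]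

end Step

section Coefficients

/-- The weight of one step of length `h` with volatility matrix `s`, for the nonlinearity linearised
as `(a, b, C) ↦ r a + p · b + Tr (Γ C)`, is admissible. -/
def StepAdmissible {d : ℕ} (Q h : ℝ) (s : Mat d) (r : ℝ) (p : Vec d) (Γ : Mat d) : Prop :=
  Admissible Q h (1 + h * r) ((√h • s)⁻¹ *ᵥ (h • p)) ((√h • s)⁻¹ * (h • Γ) * (√h • s)⁻¹ᵀ)

/-- All the hypotheses on the coefficients in Euclidean norms, with the single constant `Q`. -/
structure UniformCoeff {d : ℕ} (Q : ℝ) (F : ℝ → Vec d → ℝ → Vec d → Mat d → ℝ)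
    (μ : ℝ → Vec d → Vec d) (σ : ℝ → Vec d → Mat d) : Prop where
  one_le : 1 ≤ Q
  isUnit_det : ∀ t x, IsUnit (σ t x).det
  l2Norm_drift_le : ∀ t x, l2Norm (μ t x) ≤ Q
  l2OpNorm_vol_le : ∀ t x, l2OpNorm (σ t x) ≤ Q
  l2OpNorm_inv_le : ∀ t x, l2OpNorm (σ t x)⁻¹ ≤ Q
  l2Norm_drift_sub_le : ∀ t x y, l2Norm (μ t x - μ t y) ≤ Q * l2Norm (x - y)
  l2OpNorm_vol_sub_le : ∀ t x y, l2OpNorm (σ t x - σ t y) ≤ Q * l2Norm (x - y)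
  abs_source_zero_le : ∀ t x, |F t x 0 0 0| ≤ Q
  abs_source_sub_le : ∀ t x y r p γ, |F t x r p γ - F t y r p γ| ≤ Q * l2Norm (x - y)
  exists_linearization : ∀ t x a a' b b' c c', ∃ r p Γ, Γᵀ = Γ ∧
    (∀ h, 0 < h → h ≤ Q → StepAdmissible Q h (σ t x) r p Γ) ∧
    F t x a b c - F t x a' b' c'
      = r * (a - a') + p ⬝ᵥ (b - b') + ∑ i, ∑ j, Γ i j * (c - c') i j

variable {d : ℕ} {F Fr : ℝ → Vec d → ℝ → Vec d → Mat d → ℝ} {μ : ℝ → Vec d → Vec d}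
  {σ : ℝ → Vec d → Mat d} {Fp : ℝ → Vec d → ℝ → Vec d → Mat d → Vec d}
  {Fγ : ℝ → Vec d → ℝ → Vec d → Mat d → Mat d}

namespace AssumptionF

lemma exists_sub_eq (hF : AssumptionF d σ F Fr Fp Fγ) (t : ℝ) (x : Vec d) (a a' : ℝ)
    (b b' : Vec d) (c c' : Mat d) :
    ∃ r p γ, F t x a b c - F t x a' b' c'
      = Fr t x r p γ * (a - a') + Fp t x r p γ ⬝ᵥ (b - b')
        + ∑ i, ∑ j, Fγ t x r p γ i j * (c - c') i j := by
  obtain ⟨⟨r, p, γ⟩, -, hmean⟩ := domain_mvt (s := univ) (x := (a', b', c')) (y := (a, b, c))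
    (fun q _ => (hF.differentiable t x q.1 q.2.1 q.2.2).hasFDerivAt.hasFDerivWithinAt)
    convex_univ (mem_univ _) (mem_univ _)
  exact ⟨r, p, γ, hmean.trans (hF.deriv_eq t x r p γ ((a, b, c) - (a', b', c')))⟩

lemma exists_deriv_le (hF : AssumptionF d σ F Fr Fp Fγ) :
    ∃ C ≥ 0, ∀ t x r p γ, |Fr t x r p γ| ≤ C ∧ l2Norm (Fp t x r p γ) ≤ C := by
  obtain ⟨L, hL0, hL⟩ := hF.lipschitz
  refine ⟨(d + 1) * (3 * L), by positivity, fun t x r p γ => ?_⟩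
  set f : ℝ × Vec d × Mat d → ℝ := fun q => F t x q.1 q.2.1 q.2.2 with hf
  have hlip : LipschitzWith (3 * L).toNNReal f := by
    refine LipschitzWith.of_dist_le' fun u v => ?_
    have hr : |u.1 - v.1| ≤ ‖u - v‖ := norm_fst_le (u - v)
    have hp : ‖u.2.1 - v.2.1‖ ≤ ‖u - v‖ := (norm_fst_le (u - v).2).trans (norm_snd_le (u - v))
    have hγ : ‖u.2.2 - v.2.2‖ ≤ ‖u - v‖ := (norm_snd_le (u - v).2).trans (norm_snd_le (u - v))
    rw [Real.dist_eq, dist_eq_norm]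
    refine (hL t x x u.1 v.1 u.2.1 v.2.1 u.2.2 v.2.2).trans ?_
    rw [sub_self, norm_zero, mul_comm 3 L, mul_assoc]
    gcongr
    linarith
  have hbound : ∀ q, ‖q‖ ≤ 1 → |fderiv ℝ f (r, p, γ) q| ≤ 3 * L := fun q hq => by
    have hnorm := norm_fderiv_le_of_lipschitz ℝ (x₀ := (r, p, γ)) hlip
    rw [Real.coe_toNNReal _ (by positivity)] at hnorm
    exact ((fderiv ℝ f (r, p, γ)).le_of_opNorm_le_of_le hnorm hq).trans_eq (mul_one _)
  have hderiv := hF.deriv_eq t x r p γ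
  rw [← hf] at hderiv
  constructor
  · have := hbound (1, 0, 0) (by simp [Prod.norm_def])
    rw [hderiv] at this
    have : |Fr t x r p γ| ≤ 3 * L := by simpa using this
    nlinarith [(Nat.cast_nonneg d : (0 : ℝ) ≤ d)]
  · refine (l2Norm_le _).trans (mul_le_mul_of_nonneg_left ?_ (by positivity))
    refine (pi_norm_le_iff_of_nonneg (by positivity)).2 fun i => ?_
    have := hbound (0, Pi.single i 1, 0) (by simp [Prod.norm_def, Pi.norm_single])
    rw [hderiv] at this
    simpa using this

lemma stepAdmissible (hF : AssumptionF d σ F Fr Fp Fγ) {Q K R R' h t r : ℝ} {x p : Vec d}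
    {γ : Mat d} (hQ : 1 ≤ Q) (hh : 0 < h) (hhQ : h ≤ Q) (hσ : IsUnit (σ t x).det)
    (hr : |Fr t x r p γ| ≤ Q) (hp : l2Norm (Fp t x r p γ) ≤ R) (hinv : l2OpNorm (σ t x)⁻¹ ≤ R')
    (hR : R' * R ≤ Q) (hKQ : K ≤ Q)
    (hK : ∀ w, Fp t x r p γ ⬝ᵥ w + w ⬝ᵥ (Fγ t x r p γ).mulVec w ≥ -K) :
    StepAdmissible Q h (σ t x) (Fr t x r p γ) (Fp t x r p γ) (Fγ t x r p γ) := by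
  have hsqrt : √h ≠ 0 := (Real.sqrt_pos.2 hh).ne'
  have hScale := inv_smul_matrix hsqrt hσ
  have hB : (√h • σ t x)⁻¹ * (h • Fγ t x r p γ) * (√h • σ t x)⁻¹ᵀ
      = (σ t x)⁻¹ * Fγ t x r p γ * (σ t x)⁻¹ᵀ := by
    rw [hScale, transpose_smul]
    simp only [Matrix.smul_mul, Matrix.mul_smul, smul_smul]
    have hone : (√h)⁻¹ * (h * (√h)⁻¹) = 1 := by
      rw [mul_left_comm, ← mul_inv, Real.mul_self_sqrt hh.le, mul_inv_cancel₀ hh.ne']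
    rw [hone, one_smul]
  refine ⟨hQ, hh, hhQ, ?_, ?_, ?_, ?_, fun z => ?_⟩
  · rw [add_sub_cancel_left, abs_mul, abs_of_pos hh, mul_comm]
    exact mul_le_mul_of_nonneg_right hr hh.le
  · have hb : (√h • σ t x)⁻¹ *ᵥ (h • Fp t x r p γ) = √h • ((σ t x)⁻¹ *ᵥ Fp t x r p γ) := by
      rw [hScale, smul_mulVec, mulVec_smul, smul_smul, ← div_eq_inv_mul, Real.div_sqrt]
    rw [hb, l2Norm_smul, abs_of_nonneg (Real.sqrt_nonneg h), mul_comm]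
    refine mul_le_mul_of_nonneg_right (((l2Norm_mulVec_le _ _).trans ?_).trans hR)
      (Real.sqrt_nonneg h)
    exact mul_le_mul hinv hp (l2Norm_nonneg _) ((l2OpNorm_nonneg _).trans hinv)
  · rw [hB, ← conjTranspose_eq_transpose_of_trivial]
    exact (hF.psd t x r p γ).mul_mul_conjTranspose_same _
  · have htrace := hF.trace_le_one t x r p γ
    rw [Matrix.mul_inv_rev, ← transpose_nonsing_inv, ← trace_mul_cycle] at htrace
    rw [hB]
    nlinarith
  · have hlow := mul_le_mul_of_nonneg_left (hK ((√h • σ t x)⁻¹ᵀ *ᵥ z)) hh.le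
    have hvec : ∀ u, ((√h • σ t x)⁻¹ *ᵥ u) ⬝ᵥ z = u ⬝ᵥ (√h • σ t x)⁻¹ᵀ *ᵥ z := fun u => by
      rw [dotProduct_comm, dotProduct_mulVec, ← mulVec_transpose, dotProduct_comm]
    rw [← mulVec_mulVec, ← mulVec_mulVec, dotProduct_comm z, hvec, hvec, smul_mulVec,
      smul_dotProduct, smul_dotProduct, dotProduct_comm ((Fγ t x r p γ) *ᵥ _)]
    simp only [smul_eq_mul]
    nlinarith

end AssumptionF

lemma exists_l2Norm_le {α β : Type*} {f : α → β → Vec d} (hf : ∃ C : ℝ, ∀ a b, ‖f a b‖ ≤ C) :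
    ∃ C ≥ 0, ∀ a b, l2Norm (f a b) ≤ C := by
  obtain ⟨C, hC⟩ := hf
  exact ⟨(d + 1) * |C|, by positivity, fun a b => (l2Norm_le _).trans
    (by gcongr; exact (hC a b).trans (le_abs_self C))⟩

lemma exists_l2OpNorm_le {α β : Type*} {f : α → β → Mat d} (hf : ∃ C : ℝ, ∀ a b, ‖f a b‖ ≤ C) :
    ∃ C ≥ 0, ∀ a b, l2OpNorm (f a b) ≤ C := by
  obtain ⟨C, hC⟩ := hf
  exact ⟨(d + 1) ^ 2 * |C|, by positivity, fun a b => (l2OpNorm_le _).trans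
    (by gcongr; exact (hC a b).trans (le_abs_self C))⟩

lemma exists_l2Norm_sub_le (hμ : ∃ L : ℝ, ∀ s y y', ‖μ s y - μ s y'‖ ≤ L * ‖y - y'‖) :
    ∃ L ≥ 0, ∀ s y y', l2Norm (μ s y - μ s y') ≤ L * l2Norm (y - y') := by
  obtain ⟨L, hL⟩ := hμ
  refine ⟨(d + 1) * |L|, by positivity, fun s y y' => (l2Norm_le _).trans ?_⟩
  rw [mul_assoc]
  gcongr
  exact (hL s y y').trans (mul_le_mul (le_abs_self L) (norm_le_l2Norm _) (norm_nonneg _)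
    (abs_nonneg L))

lemma exists_l2OpNorm_sub_le (hσ : ∃ L : ℝ, ∀ s y y', ‖σ s y - σ s y'‖ ≤ L * ‖y - y'‖) :
    ∃ L ≥ 0, ∀ s y y', l2OpNorm (σ s y - σ s y') ≤ L * l2Norm (y - y') := by
  obtain ⟨L, hL⟩ := hσ
  refine ⟨(d + 1) ^ 2 * |L|, by positivity, fun s y y' => (l2OpNorm_le _).trans ?_⟩
  rw [mul_assoc]
  gcongr
  exact (hL s y y').trans (mul_le_mul (le_abs_self L) (norm_le_l2Norm _) (norm_nonneg _)
    (abs_nonneg L))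

lemma exists_uniformCoeff {T : ℝ} (hT : 0 ≤ T) (hμbdd : ∃ C : ℝ, ∀ s y, ‖μ s y‖ ≤ C)
    (hσbdd : ∃ C : ℝ, ∀ s y, ‖σ s y‖ ≤ C)
    (hμlip : ∃ L : ℝ, ∀ s y y', ‖μ s y - μ s y'‖ ≤ L * ‖y - y'‖)
    (hσlip : ∃ L : ℝ, ∀ s y y', ‖σ s y - σ s y'‖ ≤ L * ‖y - y'‖)
    (hσinv : ∀ s y, IsUnit (σ s y).det) (hσinvbdd : ∃ C : ℝ, ∀ s y, ‖(σ s y)⁻¹‖ ≤ C)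
    (hF : AssumptionF d σ F Fr Fp Fγ) :
    ∃ Q, T ≤ Q ∧ UniformCoeff Q F μ σ := by
  obtain ⟨Cμ, hCμ0, hCμ⟩ := exists_l2Norm_le hμbdd
  obtain ⟨Cσ, hCσ0, hCσ⟩ := exists_l2OpNorm_le hσbdd
  obtain ⟨Ci, hCi0, hCi⟩ := exists_l2OpNorm_le hσinvbdd
  obtain ⟨Lμ, hLμ0, hLμ⟩ := exists_l2Norm_sub_le hμlip
  obtain ⟨Lσ, hLσ0, hLσ⟩ := exists_l2OpNorm_sub_le hσlip
  obtain ⟨LF, hLF0, hLF⟩ := hF.lipschitz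
  obtain ⟨C₀, hC₀⟩ := hF.bound_at_zero
  have hC₀0 : 0 ≤ C₀ := (abs_nonneg _).trans (hC₀ 0 0)
  obtain ⟨CD, hCD0, hCD⟩ := hF.exists_deriv_le
  obtain ⟨K, hK0, hK⟩ := hF.lower_bound
  have hprod : 0 ≤ Ci * CD := mul_nonneg hCi0 hCD0
  set Q := 1 + T + Cμ + Cσ + Ci + Lμ + Lσ + LF + C₀ + CD + K + Ci * CD
  have hQ1 : 1 ≤ Q := by linarith
  refine ⟨Q, by linarith, hQ1, hσinv, fun t x => (hCμ t x).trans (by linarith),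
    fun t x => (hCσ t x).trans (by linarith), fun t x => (hCi t x).trans (by linarith),
    fun t x y => (hLμ t x y).trans ?_, fun t x y => (hLσ t x y).trans ?_,
    fun t x => (hC₀ t x).trans (by linarith), fun t x y r p γ => ?_,
    fun t x a a' b b' c c' => ?_⟩
  · exact mul_le_mul_of_nonneg_right (by linarith) (l2Norm_nonneg _)
  · exact mul_le_mul_of_nonneg_right (by linarith) (l2Norm_nonneg _)
  · refine (hLF t x y r r p p γ γ).trans ?_
    rw [sub_self, sub_self, sub_self, norm_zero, norm_zero, abs_zero, add_zero, add_zero, add_zero]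
    have := norm_le_l2Norm (x - y)
    gcongr
    linarith
  · obtain ⟨r, p, γ, hsub⟩ := hF.exists_sub_eq t x a a' b b' c c'
    refine ⟨Fr t x r p γ, Fp t x r p γ, Fγ t x r p γ, ?_, fun h hh hhQ => ?_, hsub⟩
    · exact (conjTranspose_eq_transpose_of_trivial _).symm.trans (hF.psd t x r p γ).isHermitian
    · exact hF.stepAdmissible hQ1 hh hhQ (hσinv t x) ((hCD t x r p γ).1.trans (by linarith))
        (hCD t x r p γ).2 (hCi t x) (by linarith) (by linarith) (hK t x r p γ)

end Coefficients

/-! ### Stability against quadratic barriers -/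

lemma l2Norm_add_sq {d : ℕ} (u v : Vec d) :
    l2Norm (u + v) ^ 2 = l2Norm u ^ 2 + 2 * (u ⬝ᵥ v) + l2Norm v ^ 2 := by
  simp only [l2Norm_sq, add_dotProduct, dotProduct_add, dotProduct_comm v u]
  ring

section SecondMoment

variable {d : ℕ} {Q h β : ℝ} {b : Vec d} {B : Mat d}

lemma l2Norm_add_sqrt_smul_mulVec_sq_le {s : Mat d} (hh : 0 ≤ h) (hs : l2OpNorm s ≤ Q)
    (a z : Vec d) : l2Norm (a + (√h • s) *ᵥ z) ^ 2
      ≤ l2Norm a ^ 2 + ((2 * √h) • (sᵀ *ᵥ a)) ⬝ᵥ z + h * Q ^ 2 * l2Norm z ^ 2 := by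
  have hcross : 2 * (a ⬝ᵥ (√h • s) *ᵥ z) = ((2 * √h) • (sᵀ *ᵥ a)) ⬝ᵥ z := by
    rw [smul_mulVec, dotProduct_smul, smul_dotProduct, mulVec_transpose, dotProduct_mulVec]
    simp only [smul_eq_mul]
    ring
  have hsz : l2Norm (s *ᵥ z) ≤ Q * l2Norm z :=
    (l2Norm_mulVec_le s z).trans (mul_le_mul_of_nonneg_right hs (l2Norm_nonneg z))
  have hsq : l2Norm ((√h • s) *ᵥ z) ^ 2 ≤ h * Q ^ 2 * l2Norm z ^ 2 := by
    rw [smul_mulVec, l2Norm_smul, mul_pow, sq_abs, Real.sq_sqrt hh, mul_assoc, ← mul_pow]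
    exact mul_le_mul_of_nonneg_left (pow_le_pow_left₀ (l2Norm_nonneg _) hsz 2) hh
  rw [l2Norm_add_sq, hcross]
  linarith

/-- The cross term has order `h` because the first moment of `quadWeight β b B` is `b`, of order
`√h`. -/
lemma Admissible.dotProduct_le (H : Admissible Q h β b B) {s : Mat d} (hs : l2OpNorm s ≤ Q)
    (a : Vec d) : ((2 * √h) • (sᵀ *ᵥ a)) ⬝ᵥ b ≤ Q ^ 2 * h * (l2Norm a ^ 2 + 1) := by
  have hQ := zero_le_one.trans H.one_le
  have hsa : l2Norm (sᵀ *ᵥ a) ≤ Q * l2Norm a := (l2Norm_mulVec_le _ _).trans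
    (mul_le_mul_of_nonneg_right ((l2OpNorm_transpose s).trans_le hs) (l2Norm_nonneg a))
  calc ((2 * √h) • (sᵀ *ᵥ a)) ⬝ᵥ b ≤ 2 * √h * (l2Norm (sᵀ *ᵥ a) * l2Norm b) := by
        rw [smul_dotProduct, smul_eq_mul]
        gcongr
        exact (le_abs_self _).trans (abs_dotProduct_le _ _)
    _ ≤ 2 * √h * ((Q * l2Norm a) * (Q * √h)) := by
        have := l2Norm_nonneg b
        have := l2Norm_nonneg a
        gcongr
        exact H.l2Norm_le
    _ = Q ^ 2 * h * (2 * l2Norm a) := by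
        nth_rw 3 [← Real.mul_self_sqrt H.pos.le]
        ring
    _ ≤ Q ^ 2 * h * (l2Norm a ^ 2 + 1) := by
        have := H.pos
        gcongr
        nlinarith [sq_nonneg (l2Norm a - 1)]

lemma Admissible.abs_quadWeight_mul_l2Norm_sq_le (H : Admissible Q h β b B) {s : Mat d}
    (hs : l2OpNorm s ≤ Q) (a z : Vec d) :
    |quadWeight β b B z| * l2Norm (a + (√h • s) *ᵥ z) ^ 2
      ≤ quadWeight (β + 10 * Q * h) b B z * l2Norm a ^ 2
        + quadWeight (β + 10 * Q * h) b B z * (((2 * √h) • (sᵀ *ᵥ a)) ⬝ᵥ z)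
        + 14 * Q ^ 4 * h * (1 + l2Norm z) ^ 4 := by
  have hQ := H.one_le
  have hh := H.pos
  have hz := l2Norm_nonneg z
  obtain ⟨w, hw⟩ : ∃ w, w = quadWeight (β + 10 * Q * h) b B z := ⟨_, rfl⟩
  have hw' : w = quadWeight β b B z + 10 * Q * h := by rw [hw]; unfold quadWeight; ring
  have hle : |quadWeight β b B z| ≤ w := hw' ▸ H.abs_quadWeight_le_add z
  have hsq := l2Norm_add_sqrt_smul_mulVec_sq_le hh.le hs a z
  have hwle : w ≤ 14 * Q ^ 2 * (1 + l2Norm z) ^ 2 := by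
    nlinarith [H.quadWeight_le z, H.le, mul_nonneg (sq_nonneg Q) hz,
      mul_nonneg (sq_nonneg Q) (sq_nonneg (l2Norm z))]
  rw [← hw]
  calc _ ≤ w * (l2Norm a ^ 2 + ((2 * √h) • (sᵀ *ᵥ a)) ⬝ᵥ z + h * Q ^ 2 * l2Norm z ^ 2) :=
        mul_le_mul hle hsq (sq_nonneg _) ((abs_nonneg _).trans hle)
    _ = w * l2Norm a ^ 2 + w * (((2 * √h) • (sᵀ *ᵥ a)) ⬝ᵥ z)
        + h * Q ^ 2 * (w * l2Norm z ^ 2) := by ring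
    _ ≤ w * l2Norm a ^ 2 + w * (((2 * √h) • (sᵀ *ᵥ a)) ⬝ᵥ z)
        + h * Q ^ 2 * (14 * Q ^ 2 * (1 + l2Norm z) ^ 2 * (1 + l2Norm z) ^ 2) := by
        gcongr
        linarith
    _ = _ := by ring

lemma Admissible.integral_abs_quadWeight_mul_l2Norm_sq_le (H : Admissible Q h β b B) {s : Mat d}
    (hs : l2OpNorm s ≤ Q) (a : Vec d) :
    ∫ z, |quadWeight β b B z| * l2Norm (a + (√h • s) *ᵥ z) ^ 2 ∂gaussVec d 1
      ≤ (1 + 12 * Q ^ 2 * h) * l2Norm a ^ 2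
        + (Q ^ 2 + 14 * Q ^ 4 * ∫ z : Vec d, (1 + l2Norm z) ^ 4 ∂gaussVec d 1) * h := by
  have hw := polyGrowth_quadWeight (α := Unit) β b B
  have hw' := polyGrowth_quadWeight (α := Unit) (β + 10 * Q * h) b B
  have hX : PolyGrowth fun (_ : Unit) (z : Vec d) => l2Norm (a + (√h • s) *ᵥ z) ^ 2 :=
    (PolyGrowth.l2Norm fun i => (PolyGrowth.const (a i)).add (polyGrowth_mulVec _ i)).pow 2
  have hconst := (hw'.mul (.const (l2Norm a ^ 2))).integrable ()
  have hlin := (hw'.mul (.dotProduct (fun i => .const (((2 * √h) • (sᵀ *ᵥ a)) i))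
    .coord)).integrable ()
  have hpow := ((polyGrowth_one_add_l2Norm_pow (α := Unit) (d := d) 4).integrable ()).const_mul
    (14 * Q ^ 4 * h)
  calc _ ≤ _ := integral_mono ((hw.abs.mul hX).integrable ())
        ((hconst.fun_add hlin).fun_add hpow) (H.abs_quadWeight_mul_l2Norm_sq_le hs a)
    _ = (β + 10 * Q * h) * l2Norm a ^ 2 + ((2 * √h) • (sᵀ *ᵥ a)) ⬝ᵥ b
        + 14 * Q ^ 4 * h * ∫ z : Vec d, (1 + l2Norm z) ^ 4 ∂gaussVec d 1 := by
        rw [integral_add (hconst.fun_add hlin) hpow, integral_add hconst hlin, integral_mul_const,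
          integral_quadWeight, integral_quadWeight_mul_dotProduct, integral_const_mul]
    _ ≤ _ := by
        have hβ := mul_le_mul_of_nonneg_right (le_of_abs_le H.abs_sub_one_le) (sq_nonneg (l2Norm a))
        have hQ : Q * (h * l2Norm a ^ 2) ≤ Q ^ 2 * (h * l2Norm a ^ 2) :=
          mul_le_mul_of_nonneg_right (by nlinarith [H.one_le])
            (mul_nonneg H.pos.le (sq_nonneg _))
        linarith [H.dotProduct_le hs a]

lemma exists_integral_abs_quadWeight_mul_l2Norm_sq_le (d : ℕ) (Q : ℝ) :
    ∃ C ≥ 0, ∀ {h β : ℝ} {b u m : Vec d} {B s : Mat d}, Admissible Q h β b B → l2Norm m ≤ Q →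
      l2OpNorm s ≤ Q →
      ∫ z, |quadWeight β b B z| * l2Norm (u + h • m + (√h • s) *ᵥ z) ^ 2 ∂gaussVec d 1
        ≤ (1 + C * h) * l2Norm u ^ 2 + C * h := by
  obtain ⟨G, hG⟩ : ∃ G, G = ∫ z : Vec d, (1 + l2Norm z) ^ 4 ∂gaussVec d 1 := ⟨_, rfl⟩
  have : 0 ≤ G :=
    hG ▸ integral_nonneg fun z => pow_nonneg (add_nonneg zero_le_one (l2Norm_nonneg z)) 4
  refine ⟨30 * Q ^ 6 + 14 * Q ^ 4 * G, by positivity, fun {h β b u m B s} H hm hs => ?_⟩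
  have hQ := H.one_le
  have hh := H.pos
  have := l2Norm_nonneg u
  have hdrift : l2Norm (u + h • m) ^ 2
      ≤ (1 + Q * h) * l2Norm u ^ 2 + 2 * Q ^ 3 * h := by
    have hle : l2Norm (u + h • m) ≤ l2Norm u + h * Q := (l2Norm_add_le _ _).trans
      (by rw [l2Norm_smul, abs_of_pos hh]; gcongr)
    have hsq := mul_nonneg (by positivity : 0 ≤ Q * h) (sq_nonneg (l2Norm u - 1))
    have hhQ : Q ^ 2 * h * h ≤ Q ^ 2 * h * Q := mul_le_mul_of_nonneg_left H.le (by positivity)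
    have hQ3 : Q * h ≤ Q ^ 3 * h :=
      mul_le_mul_of_nonneg_right (le_self_pow₀ hQ (by norm_num)) hh.le
    nlinarith [pow_le_pow_left₀ (l2Norm_nonneg _) hle 2]
  have hpow : ∀ k ≤ 6, Q ^ k ≤ Q ^ 6 := fun _ hk => pow_le_pow_right₀ hQ hk
  refine (H.integral_abs_quadWeight_mul_l2Norm_sq_le hs _).trans ?_
  rw [← hG]
  have hcoef : 12 * Q ^ 2 + Q + 12 * Q ^ 2 * (Q * h) ≤ 30 * Q ^ 6 + 14 * Q ^ 4 * G := by
    have := mul_le_mul_of_nonneg_left H.le (by positivity : 0 ≤ 12 * Q ^ 3)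
    have : 0 ≤ 14 * Q ^ 4 * G := by positivity
    linarith [hpow 1 (by norm_num), hpow 2 (by norm_num), hpow 4 (by norm_num)]
  have hconst : (1 + 12 * Q ^ 2 * h) * (2 * Q ^ 3) + Q ^ 2 ≤ 30 * Q ^ 6 := by
    have := mul_le_mul_of_nonneg_left H.le (by positivity : 0 ≤ 24 * Q ^ 5)
    linarith [hpow 2 (by norm_num), hpow 3 (by norm_num), pow_nonneg (zero_le_one.trans hQ) 6]
  have hC := mul_le_mul_of_nonneg_left hdrift (by positivity : 0 ≤ 1 + 12 * Q ^ 2 * h)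
  have hquad := mul_le_mul_of_nonneg_right hcoef (by positivity : 0 ≤ h * l2Norm u ^ 2)
  have hfree := mul_le_mul_of_nonneg_right hconst hh.le
  linarith

end SecondMoment

section Stability

variable {d : ℕ} {Q h t : ℝ} {F : ℝ → Vec d → ℝ → Vec d → Mat d → ℝ} {μ : ℝ → Vec d → Vec d}
  {σ : ℝ → Vec d → Mat d} {ψ φ : Vec d → ℝ}

lemma UniformCoeff.exists_abs_step_sub_le (H : UniformCoeff Q F μ σ) (hh : 0 < h) (hhQ : h ≤ Q)
    {M : ℝ} (hψ : Continuous ψ) (hψM : ∀ y, |ψ y| ≤ M) (hφ : Continuous φ)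
    (hφM : ∀ y, |φ y| ≤ M) (x y : Vec d) :
    ∃ r p Γ, Γᵀ = Γ ∧ StepAdmissible Q h (σ t x) r p Γ ∧
      |step F μ σ h t ψ x - step F μ σ h t φ y
        - (linStep μ σ h t r p Γ ψ x - linStep μ σ h t r p Γ φ y)| ≤ h * (Q * l2Norm (x - y)) := by
  obtain ⟨r, p, Γ, hΓ, hadm, hmean⟩ := H.exists_linearization t x
    (eulerMean μ σ h t ψ x) (eulerMean μ σ h t φ y) (eulerGrad μ σ h t ψ x)
    (eulerGrad μ σ h t φ y) (eulerHess μ σ h t ψ x) (eulerHess μ σ h t φ y)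
  refine ⟨r, p, Γ, hΓ, hadm h hh hhQ, ?_⟩
  have hx := H.abs_source_sub_le t x y (eulerMean μ σ h t φ y) (eulerGrad μ σ h t φ y)
    (eulerHess μ σ h t φ y)
  rw [← eulerMean_add_eq_linStep hh (H.isUnit_det t x) hψ hψM,
    ← eulerMean_add_eq_linStep hh (H.isUnit_det t y) hφ hφM, step_eq, step_eq]
  simp only [dotProduct_sub, Matrix.sub_apply, mul_sub, Finset.sum_sub_distrib] at hmean
  refine Eq.trans_le ?_ (mul_le_mul_of_nonneg_left hx hh.le)
  rw [← abs_of_pos hh, ← abs_mul, abs_of_pos hh]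
  congr 1
  linear_combination h * hmean

lemma StepAdmissible.abs_linStep_sub_le {r : ℝ} {p : Vec d} {Γ : Mat d} {t : ℝ} {x x₀ : Vec d}
    (H : StepAdmissible Q h (σ t x) r p Γ) {M A b : ℝ} (hA : 0 ≤ A)
    (hψ : Continuous ψ) (hψM : ∀ y, |ψ y| ≤ M) (hφ : Continuous φ) (hφM : ∀ y, |φ y| ≤ M)
    (hle : ∀ y, |ψ y - φ y| ≤ A + b * l2Norm (y - x₀) ^ 2) :
    |linStep μ σ h t r p Γ ψ x - linStep μ σ h t r p Γ φ x|
      ≤ (1 + 11 * Q * h) * A + b * ∫ z, |quadWeight (1 + h * r) ((√h • σ t x)⁻¹ *ᵥ (h • p))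
          ((√h • σ t x)⁻¹ * (h • Γ) * (√h • σ t x)⁻¹ᵀ) z|
            * l2Norm (x - x₀ + h • μ t x + (√h • σ t x) *ᵥ z) ^ 2 ∂gaussVec d 1 := by
  obtain ⟨w, hw⟩ : ∃ w, w = quadWeight (1 + h * r) ((√h • σ t x)⁻¹ *ᵥ (h • p))
    ((√h • σ t x)⁻¹ * (h • Γ) * (√h • σ t x)⁻¹ᵀ) := ⟨_, rfl⟩
  have hwp : PolyGrowth fun (_ : Unit) => w := hw ▸ polyGrowth_quadWeight _ _ _
  have hX : Continuous fun z => x + h • μ t x + (√h • σ t x) *ᵥ z := by fun_prop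
  have hdiff : ∀ {χ : Vec d → ℝ}, Continuous χ → (∀ y, |χ y| ≤ M) →
      Integrable (fun z => χ (x + h • μ t x + (√h • σ t x) *ᵥ z) * w z) (gaussVec d 1) :=
    fun hχ hχM => ((PolyGrowth.of_bounded (fun _ => hχ.comp hX) fun _ _ => hχM _).mul
      hwp).integrable ()
  have hsq : PolyGrowth fun (_ : Unit) (z : Vec d) =>
      l2Norm (x - x₀ + h • μ t x + (√h • σ t x) *ᵥ z) ^ 2 :=
    (PolyGrowth.l2Norm fun i => (PolyGrowth.const _).add (polyGrowth_mulVec _ i)).pow 2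
  have hconst := (hwp.abs.integrable ()).const_mul A
  have hquad := ((hwp.abs.mul hsq).integrable ()).const_mul b
  rw [linStep, linStep, linMean, linMean, ← hw,
    ← integral_sub (hdiff hψ hψM) (hdiff hφ hφM), ← Real.norm_eq_abs]
  refine (norm_integral_le_of_norm_le (hconst.fun_add hquad) (.of_forall fun z => ?_)).trans ?_
  · have := hle (x + h • μ t x + (√h • σ t x) *ᵥ z)
    rw [add_sub_right_comm, add_sub_right_comm] at this
    rw [← sub_mul, norm_mul, Real.norm_eq_abs, Real.norm_eq_abs]
    linarith [mul_le_mul_of_nonneg_right this (abs_nonneg (w z))]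
  · rw [integral_add hconst hquad, integral_const_mul, integral_const_mul, mul_comm A]
    gcongr
    exact hw ▸ Admissible.integral_abs_quadWeight_le H

lemma exists_abs_step_sub_le_of_quadratic (d : ℕ) (Q : ℝ) :
    ∃ C ≥ 0, ∀ {F : ℝ → Vec d → ℝ → Vec d → Mat d → ℝ} {μ : ℝ → Vec d → Vec d}
      {σ : ℝ → Vec d → Mat d} {ψ φ : Vec d → ℝ} {h t M A b : ℝ} {x₀ : Vec d},
      UniformCoeff Q F μ σ → 0 < h → h ≤ Q → Continuous ψ → (∀ y, |ψ y| ≤ M) → Continuous φ →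
      (∀ y, |φ y| ≤ M) → 0 ≤ A → 0 ≤ b → (∀ y, |ψ y - φ y| ≤ A + b * l2Norm (y - x₀) ^ 2) →
      ∀ x, |step F μ σ h t ψ x - step F μ σ h t φ x|
        ≤ (1 + C * h) * (A + b * l2Norm (x - x₀) ^ 2) + C * h * b := by
  obtain ⟨C, hC0, hC⟩ := exists_integral_abs_quadWeight_mul_l2Norm_sq_le d Q
  refine ⟨C + 11 * |Q|, by positivity, fun {F μ σ ψ φ h t M A b x₀} H hh hhQ hψ hψM hφ hφM hA hb
    hle x => ?_⟩
  obtain ⟨r, p, Γ, -, hadm, hstep⟩ := H.exists_abs_step_sub_le hh hhQ hψ hψM hφ hφM x x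
  rw [sub_self x, l2Norm_zero, mul_zero, mul_zero, abs_nonpos_iff, sub_eq_zero] at hstep
  rw [hstep, abs_of_pos (show 0 < Q by linarith [H.one_le])]
  refine (hadm.abs_linStep_sub_le hA hψ hψM hφ hφM hle).trans ?_
  have hsq := mul_le_mul_of_nonneg_left
    (hC (u := x - x₀) hadm (H.l2Norm_drift_le t x) (H.l2OpNorm_vol_le t x)) hb
  have hCA : 0 ≤ C * h * A := by positivity
  have hQ := H.one_le
  have hQb : 0 ≤ 11 * Q * h * (b * l2Norm (x - x₀) ^ 2 + b) := by positivity
  linarith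

lemma UniformCoeff.abs_step_zero_le (H : UniformCoeff Q F μ σ) (hh : 0 < h) (x : Vec d) :
    |step F μ σ h t (fun _ => 0) x| ≤ h * Q := by
  have hgrad : eulerGrad μ σ h t (fun _ => 0) x = 0 := by ext; simp [eulerGrad]
  have hhess : eulerHess μ σ h t (fun _ => 0) x = 0 := by ext; simp [eulerHess]
  rw [step_eq, hgrad, hhess, eulerMean, integral_zero, zero_add, abs_mul, abs_of_pos hh]
  exact mul_le_mul_of_nonneg_left (H.abs_source_zero_le t x) hh.le

lemma linStep_const {r : ℝ} {p : Vec d} {Γ : Mat d} (c : ℝ) (x : Vec d) :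
    linStep μ σ h t r p Γ (fun _ => c) x = c * (1 + h * r) := by
  rw [linStep, linMean, integral_const_mul, integral_quadWeight]

lemma UniformCoeff.abs_step_const_sub_le (H : UniformCoeff Q F μ σ) (hh : 0 < h) (hhQ : h ≤ Q)
    (c : ℝ) (x : Vec d) : |step F μ σ h t (fun _ => c) x - c| ≤ h * (Q * (1 + |c|)) := by
  obtain ⟨r, p, Γ, -, hadm, hstep⟩ := H.exists_abs_step_sub_le (t := t) hh hhQ continuous_const
    (fun _ => le_rfl) continuous_const (fun _ => abs_zero.trans_le (abs_nonneg c)) x x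
  rw [sub_self x, l2Norm_zero, mul_zero, mul_zero, abs_nonpos_iff, sub_eq_zero, linStep_const,
    linStep_const] at hstep
  have hr : |h * r| ≤ Q * h := by simpa using hadm.abs_sub_one_le
  calc |step F μ σ h t (fun _ => c) x - c| = |step F μ σ h t (fun _ => 0) x + c * (h * r)| := by
        congr 1
        linear_combination hstep
    _ ≤ h * Q + |c| * (Q * h) := (abs_add_le _ _).trans (add_le_add (H.abs_step_zero_le hh x)
        ((abs_mul _ _).trans_le (mul_le_mul_of_nonneg_left hr (abs_nonneg c))))
    _ = _ := by ring

end Stability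

/-! ### Bounded Lipschitz functions and mollification -/

section Lipschitz

variable {d : ℕ} {ψ : Vec d → ℝ} {M M' L L' : ℝ}

/-- `ψ` is bounded by `M` and Lipschitz with constant `L` for the Euclidean norm. -/
structure HasLipBounds (ψ : Vec d → ℝ) (M L : ℝ) : Prop where
  nonneg : 0 ≤ L
  abs_le : ∀ x, |ψ x| ≤ M
  abs_sub_le : ∀ x y, |ψ x - ψ y| ≤ L * l2Norm (x - y)

namespace HasLipBounds

lemma continuous (H : HasLipBounds ψ M L) : Continuous ψ := by
  have hlip : LipschitzWith (L * (d + 1)).toNNReal ψ := LipschitzWith.of_dist_le' fun x y => by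
    rw [Real.dist_eq, dist_eq_norm, mul_assoc]
    exact (H.abs_sub_le x y).trans (mul_le_mul_of_nonneg_left (l2Norm_le _) H.nonneg)
  exact hlip.continuous

lemma mono (H : HasLipBounds ψ M L) (hM : M ≤ M') (hL : L ≤ L') : HasLipBounds ψ M' L' :=
  ⟨H.nonneg.trans hL, fun x => (H.abs_le x).trans hM, fun x y => (H.abs_sub_le x y).trans
    (mul_le_mul_of_nonneg_right hL (l2Norm_nonneg _))⟩

lemma abs_fderiv_le (H : HasLipBounds ψ M L) {D : Vec d →L[ℝ] ℝ} {x : Vec d}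
    (hD : HasFDerivAt ψ D x) (v : Vec d) : |D v| ≤ L * l2Norm v := by
  have hline : HasDerivAt (fun s : ℝ => x + s • v) v 0 := by
    simpa using ((hasDerivAt_id (0 : ℝ)).smul_const v).const_add x
  have hcomp : HasDerivAt (fun s : ℝ => ψ (x + s • v)) (D v) 0 :=
    HasFDerivAt.comp_hasDerivAt (0 : ℝ) (by simpa using hD) hline
  refine hcomp.le_of_lip' (mul_nonneg H.nonneg (l2Norm_nonneg v)) (.of_forall fun s => ?_)
  refine (H.abs_sub_le _ _).trans_eq ?_
  rw [add_sub_add_left_eq_sub, ← sub_smul, l2Norm_smul, Real.norm_eq_abs]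
  ring

end HasLipBounds

lemma abs_sub_le_of_local {f : Vec d → ℝ} {Λ δ : ℝ} (hδ : 0 < δ)
    (hf : ∀ x y, l2Norm (x - y) ≤ δ → |f x - f y| ≤ Λ * l2Norm (x - y)) (x y : Vec d) :
    |f x - f y| ≤ Λ * l2Norm (x - y) := by
  obtain ⟨n, hn⟩ := exists_nat_gt (l2Norm (x - y) / δ)
  have hn0 : (0 : ℝ) < n := (div_nonneg (l2Norm_nonneg _) hδ.le).trans_lt hn
  let P : ℕ → Vec d := fun k => x + (k / n : ℝ) • (y - x)
  have hP : ∀ k, P k - P (k + 1) = (1 / n : ℝ) • (x - y) := fun k => by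
    simp only [P]
    push_cast
    module
  have hlen : ∀ k, l2Norm (P k - P (k + 1)) = 1 / n * l2Norm (x - y) := fun k => by
    rw [hP, l2Norm_smul, abs_of_pos (by positivity)]
  have hstep : ∀ k, |f (P k) - f (P (k + 1))| ≤ Λ * (1 / n * l2Norm (x - y)) := fun k => by
    rw [← hlen k]
    refine hf _ _ ((hlen k).trans_le ?_)
    rw [div_lt_iff₀ hδ] at hn
    rw [one_div, inv_mul_le_iff₀ hn0]
    exact hn.le
  have hsum := dist_le_range_sum_of_dist_le (f := fun k => f (P k)) n fun {k} _ => hstep k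
  simpa [P, Real.dist_eq, hn0.ne', mul_left_comm Λ] using hsum

end Lipschitz

section Mollification

variable {d : ℕ} {ψ η : Vec d → ℝ} {M L : ℝ}

/-- The convolution of `ψ` with the kernel `η`. -/
def mollify (η ψ : Vec d → ℝ) : Vec d → ℝ :=
  convolution η ψ (ContinuousLinearMap.lsmul ℝ ℝ) volume

lemma mollify_apply (x : Vec d) : mollify η ψ x = ∫ t, η t * ψ (x - t) := rfl

lemma integrable_mul_comp_sub (hη : Continuous η) (hηs : HasCompactSupport η) (hψ : Continuous ψ)
    (x : Vec d) : Integrable fun t => η t * ψ (x - t) :=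
  hηs.convolutionExists_left (ContinuousLinearMap.lsmul ℝ ℝ) hη hψ.locallyIntegrable x

/-- A probability density with compact support and continuous derivative. -/
structure IsMollifier (η : Vec d → ℝ) : Prop where
  contDiff : ContDiff ℝ 1 η
  hasCompactSupport : HasCompactSupport η
  nonneg : ∀ t, 0 ≤ η t
  integral_eq_one : ∫ t, η t = 1

namespace IsMollifier

lemma integrable (hη : IsMollifier η) : Integrable η :=
  hη.contDiff.continuous.integrable_of_hasCompactSupport hη.hasCompactSupport

lemma abs_integral_mul_le (hη : IsMollifier η) {u : Vec d → ℝ} {C : ℝ} (hu : ∀ t, |u t| ≤ C) :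
    |∫ t, η t * u t| ≤ C := by
  rw [← Real.norm_eq_abs]
  refine (norm_integral_le_of_norm_le (hη.integrable.mul_const C) (.of_forall fun t => ?_)).trans_eq
    (by rw [integral_mul_const, hη.integral_eq_one, one_mul])
  rw [norm_mul, Real.norm_of_nonneg (hη.nonneg t)]
  exact mul_le_mul_of_nonneg_left (hu t) (hη.nonneg t)

lemma hasLipBounds_mollify (hη : IsMollifier η) (hψ : HasLipBounds ψ M L) :
    HasLipBounds (mollify η ψ) M L := by
  refine ⟨hψ.nonneg, fun x => hη.abs_integral_mul_le fun t => hψ.abs_le _, fun x y => ?_⟩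
  have hint := integrable_mul_comp_sub hη.contDiff.continuous hη.hasCompactSupport hψ.continuous
  rw [mollify_apply, mollify_apply, ← integral_sub (hint x) (hint y)]
  simp only [← mul_sub]
  refine hη.abs_integral_mul_le fun t => ?_
  simpa only [sub_sub_sub_cancel_right] using hψ.abs_sub_le (x - t) (y - t)

lemma hasC11Bounds_mollify (hη : IsMollifier η) (hψ : HasLipBounds ψ M L) :
    ∃ D, HasC11Bounds (mollify η ψ) D M L ((∫ t, ‖fderiv ℝ η t‖) * L) := by
  have hlip := hη.hasLipBounds_mollify hψ
  have hψloc : LocallyIntegrable ψ := hψ.continuous.locallyIntegrable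
  have hη' : Continuous (fderiv ℝ η) := hη.contDiff.continuous_fderiv one_ne_zero
  have hη's : HasCompactSupport (fderiv ℝ η) := hη.hasCompactSupport.fderiv ℝ
  obtain ⟨B, hB⟩ : ∃ B, B = (ContinuousLinearMap.lsmul ℝ ℝ : ℝ →L[ℝ] ℝ →L[ℝ] ℝ).precompL (Vec d) :=
    ⟨_, rfl⟩
  have hBapply : ∀ A c, B A c = c • A := fun A c => by
    ext v
    simp [hB, ContinuousLinearMap.precompL_apply, mul_comm]
  have hD : ∀ x, HasFDerivAt (mollify η ψ) (convolution (fderiv ℝ η) ψ B volume x) x := fun x =>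
    hB ▸ hη.hasCompactSupport.hasFDerivAt_convolution_left _ hη.contDiff hψloc x
  have hint := hη's.convolutionExists_left B hη' hψloc
  refine ⟨_, hD, hlip.abs_le, fun x v => hlip.abs_fderiv_le (hD x) v, fun x y v => ?_⟩
  have hsub : ‖convolution (fderiv ℝ η) ψ B volume x - convolution (fderiv ℝ η) ψ B volume y‖
      ≤ (∫ t, ‖fderiv ℝ η t‖) * (L * l2Norm (x - y)) := by
    rw [← integral_mul_const]
    refine (integral_sub (hint x) (hint y)).symm ▸ norm_integral_le_of_norm_le
      ((hη'.integrable_of_hasCompactSupport hη's).norm.mul_const _) (.of_forall fun t => ?_)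
    rw [hBapply, hBapply, ← sub_smul, norm_smul, mul_comm]
    refine mul_le_mul_of_nonneg_left ?_ (norm_nonneg _)
    simpa only [sub_sub_sub_cancel_right, Real.norm_eq_abs] using hψ.abs_sub_le (x - t) (y - t)
  rw [← _root_.sub_apply, mul_assoc _ L]
  exact ((ContinuousLinearMap.le_opNorm _ v).trans
    (mul_le_mul hsub (norm_le_l2Norm v) (norm_nonneg v) ((norm_nonneg _).trans hsub)))

end IsMollifier

lemma HasLipBounds.exists_hasC11Bounds_abs_sub_le (H : HasLipBounds ψ M L) {ε : ℝ} (hε : 0 < ε) :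
    ∃ φ D K, HasC11Bounds φ D M L K ∧ ∀ x, |φ x - ψ x| ≤ ε := by
  have hL := H.nonneg
  set ρ : ℝ := ε / (L * (d + 1) + 1) with hρ
  have hρ0 : 0 < ρ := by positivity
  let b : ContDiffBump (0 : Vec d) := ⟨ρ / 2, ρ, by positivity, by linarith⟩
  have hη : IsMollifier (b.normed (volume : Measure (Vec d))) :=
    ⟨b.contDiff_normed, b.hasCompactSupport_normed, b.nonneg_normed, b.integral_normed⟩
  obtain ⟨D, hD⟩ := hη.hasC11Bounds_mollify H
  refine ⟨_, D, _, hD, fun x => ?_⟩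
  refine b.dist_normed_convolution_le H.continuous.aestronglyMeasurable fun y hy => ?_
  calc |ψ y - ψ x| ≤ L * ((d + 1) * ‖y - x‖) :=
        (H.abs_sub_le y x).trans (mul_le_mul_of_nonneg_left (l2Norm_le _) hL)
    _ ≤ L * ((d + 1) * ρ) := by
        gcongr
        exact (mem_ball_iff_norm.1 hy).le
    _ ≤ (L * (d + 1) + 1) * ρ := by linarith
    _ = ε := by rw [hρ]; field_simp

end Mollification

/-! ### Iterating the scheme -/

section LipschitzStep

lemma exists_abs_linStep_sub_le (d : ℕ) (Q : ℝ) :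
    ∃ C ≥ 0, ∀ {F : ℝ → Vec d → ℝ → Vec d → Mat d → ℝ} {μ : ℝ → Vec d → Vec d}
      {σ : ℝ → Vec d → Mat d} {φ : Vec d → ℝ} {D : Vec d → Vec d →L[ℝ] ℝ} {M L K h t r : ℝ}
      {p x y : Vec d} {Γ : Mat d}, UniformCoeff Q F μ σ → HasC11Bounds φ D M L K → 0 ≤ L → Γᵀ = Γ →
      StepAdmissible Q h (σ t x) r p Γ → l2Norm (x - y) ≤ min 1 h / (2 * Q ^ 2) →
      |linStep μ σ h t r p Γ φ x - linStep μ σ h t r p Γ φ y|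
        ≤ (1 + C * h) * L * l2Norm (x - y) := by
  obtain ⟨C, hC0, hC⟩ := exists_abs_linMean_sub_le d Q
  refine ⟨C, hC0, fun {F μ σ φ D M L K h t r p x y Γ} H hφ hL hΓ hadm hxy => ?_⟩
  have hQ := H.one_le
  rcases eq_or_ne (y - x) 0 with he | he
  · obtain rfl := sub_eq_zero.1 he
    simp [l2Norm_zero]
  have hdrift : x + h • μ t x + (y - x + h • (μ t y - μ t x)) = y + h • μ t y := by module
  have hvol : σ t x + (σ t y - σ t x) = σ t y := add_sub_cancel _ _
  rw [le_div_iff₀ (by positivity), mul_left_comm, l2Norm_sub_rev] at hxy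
  have hinv : l2OpNorm ((σ t x)⁻¹ * (σ t y - σ t x)) ≤ l2Norm (y - x) * Q ^ 2 := by
    refine (l2OpNorm_mul_le _ _).trans ?_
    refine (mul_le_mul (H.l2OpNorm_inv_le t x) (H.l2OpNorm_vol_sub_le t y x) (l2OpNorm_nonneg _)
      (by positivity)).trans_eq ?_
    ring
  have := hC hφ (by rw [transpose_smul, hΓ]) (H.isUnit_det t x) hadm he (c := x + h • μ t x)
    (H.l2Norm_drift_sub_le t y x) (H.l2OpNorm_vol_sub_le t y x) hinv
    (by linarith [min_le_left 1 h]) (hxy.trans (min_le_right 1 h)) hL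
  rwa [hdrift, hvol, abs_sub_comm, l2Norm_sub_rev] at this

lemma exists_abs_step_sub_le_of_hasC11Bounds (d : ℕ) (Q : ℝ) :
    ∃ C ≥ 0, ∀ {F : ℝ → Vec d → ℝ → Vec d → Mat d → ℝ} {μ : ℝ → Vec d → Vec d}
      {σ : ℝ → Vec d → Mat d} {φ : Vec d → ℝ} {D : Vec d → Vec d →L[ℝ] ℝ} {M L K h t : ℝ},
      UniformCoeff Q F μ σ → HasC11Bounds φ D M L K → 0 ≤ L → 0 < h → h ≤ Q → ∀ x y,
      |step F μ σ h t φ x - step F μ σ h t φ y| ≤ ((1 + C * h) * L + h * Q) * l2Norm (x - y) := by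
  obtain ⟨C, hC0, hC⟩ := exists_abs_linStep_sub_le d Q
  refine ⟨C, hC0, fun {F μ σ φ D M L K h t} H hφ hL hh hhQ => ?_⟩
  have hQ := H.one_le
  refine abs_sub_le_of_local (δ := min 1 h / (2 * Q ^ 2)) (by positivity) fun x y hxy => ?_
  have hφc := hφ.continuous
  obtain ⟨r, p, Γ, hΓ, hadm, hstep⟩ :=
    H.exists_abs_step_sub_le (t := t) hh hhQ hφc hφ.abs_le hφc hφ.abs_le x y
  have hlin := hC H hφ hL hΓ hadm hxy
  linarith [abs_sub_abs_le_abs_sub (step F μ σ h t φ x - step F μ σ h t φ y)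
    (linStep μ σ h t r p Γ φ x - linStep μ σ h t r p Γ φ y)]

lemma exists_step_hasLipBounds (d : ℕ) (Q : ℝ) :
    ∃ C ≥ 0, ∀ {F : ℝ → Vec d → ℝ → Vec d → Mat d → ℝ} {μ : ℝ → Vec d → Vec d}
      {σ : ℝ → Vec d → Mat d} {ψ : Vec d → ℝ} {M L h t : ℝ}, UniformCoeff Q F μ σ →
      HasLipBounds ψ M L → 0 < h → h ≤ Q →
      HasLipBounds (step F μ σ h t ψ) ((1 + C * h) * M + C * h) ((1 + C * h) * L + C * h) := by
  obtain ⟨C₁, hC₁0, hC₁⟩ := exists_abs_step_sub_le_of_quadratic d Q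
  obtain ⟨C₂, hC₂0, hC₂⟩ := exists_abs_step_sub_le_of_hasC11Bounds d Q
  refine ⟨C₁ + C₂ + |Q|, by positivity, fun {F μ σ ψ M L h t} H hψ hh hhQ => ?_⟩
  have hQ := H.one_le
  have hM : 0 ≤ M := (abs_nonneg _).trans (hψ.abs_le 0)
  have hL := hψ.nonneg
  have hsup : ∀ {φ : Vec d → ℝ} {ε : ℝ}, Continuous φ → (∀ x, |φ x| ≤ M) → 0 ≤ ε →
      (∀ x, |ψ x - φ x| ≤ ε) → ∀ x,
      |step F μ σ h t ψ x - step F μ σ h t φ x| ≤ (1 + C₁ * h) * ε := fun hφ hφM hε hle x => by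
    simpa using hC₁ (x₀ := 0) H hh hhQ hψ.continuous hψ.abs_le hφ hφM hε le_rfl
      (by simpa using hle) x
  rw [abs_of_pos (show 0 < Q by linarith)]
  refine ⟨by positivity, fun x => ?_, fun x y => le_of_forall_pos_le_add fun ε hε => ?_⟩
  · have h0 := hsup continuous_const (fun _ => abs_zero.trans_le hM) hM (by simpa using hψ.abs_le) x
    have hle : 0 ≤ (C₂ + Q) * h * M + (C₁ + C₂) * h := by positivity
    linarith [abs_sub_abs_le_abs_sub (step F μ σ h t ψ x) (step F μ σ h t (fun _ => 0) x),
      H.abs_step_zero_le (t := t) hh x]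
  · obtain ⟨φ, D, K, hφ, hφψ⟩ := hψ.exists_hasC11Bounds_abs_sub_le
      (ε := ε / (2 * (1 + C₁ * h))) (by positivity)
    have happrox : ∀ x, |step F μ σ h t ψ x - step F μ σ h t φ x| ≤ ε / 2 := fun x =>
      (hsup hφ.continuous hφ.abs_le (by positivity)
        (fun z => (abs_sub_comm _ _).trans_le (hφψ z)) x).trans_eq (by field_simp)
    have hle : 0 ≤ ((C₁ + Q) * h * L + (C₁ + C₂) * h) * l2Norm (x - y) :=
      mul_nonneg (by positivity) (l2Norm_nonneg _)
    have hx := abs_le.1 (happrox x)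
    have hy := abs_le.1 (happrox y)
    have hxy := abs_le.1 (hC₂ (t := t) H hφ hL hh hhQ x y)
    exact abs_le.2 ⟨by linarith, by linarith⟩

end LipschitzStep

section Scheme

variable {d : ℕ} {h : ℝ} {F : ℝ → Vec d → ℝ → Vec d → Mat d → ℝ} {μ : ℝ → Vec d → Vec d}
  {σ : ℝ → Vec d → Mat d} {t : ℕ → ℝ} {ψ : ℕ → Vec d → ℝ}

/-- The functions `ψ k` are obtained by iterating the step of the scheme of length `h`, at the
times `t k`. -/
def IsStepOrbit (F : ℝ → Vec d → ℝ → Vec d → Mat d → ℝ) (μ : ℝ → Vec d → Vec d)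
    (σ : ℝ → Vec d → Mat d) (h : ℝ) (t : ℕ → ℝ) (ψ : ℕ → Vec d → ℝ) : Prop :=
  ∀ k, ψ (k + 1) = step F μ σ h (t k) (ψ k)

lemma IsStepOrbit.shift (hψ : IsStepOrbit F μ σ h t ψ) (m : ℕ) :
    IsStepOrbit F μ σ h (fun k => t (m + k)) (fun k => ψ (m + k)) :=
  fun k => hψ (m + k)

lemma exists_stepOrbit_hasLipBounds (d : ℕ) (Q : ℝ) :
    ∃ C ≥ 0, ∀ {F : ℝ → Vec d → ℝ → Vec d → Mat d → ℝ} {μ : ℝ → Vec d → Vec d}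
      {σ : ℝ → Vec d → Mat d} {h : ℝ} {t : ℕ → ℝ} {ψ : ℕ → Vec d → ℝ} {M L : ℝ},
      UniformCoeff Q F μ σ → 0 < h → h ≤ Q → IsStepOrbit F μ σ h t ψ → HasLipBounds (ψ 0) M L →
      ∀ k, HasLipBounds (ψ k) ((M + 1) * (1 + C * h) ^ k - 1) ((L + 1) * (1 + C * h) ^ k - 1) := by
  obtain ⟨C, hC0, hC⟩ := exists_step_hasLipBounds d Q
  refine ⟨C, hC0, fun H hh hhQ hψ h0 k => ?_⟩
  induction k with
  | zero => simpa using h0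
  | succ k ih =>
    rw [hψ k]
    exact (hC H ih hh hhQ).mono (by rw [pow_succ]; linarith) (by rw [pow_succ]; linarith)

lemma exists_abs_stepOrbit_sub_le_of_quadratic (d : ℕ) (Q : ℝ) :
    ∃ C ≥ 0, ∀ {F : ℝ → Vec d → ℝ → Vec d → Mat d → ℝ} {μ : ℝ → Vec d → Vec d}
      {σ : ℝ → Vec d → Mat d} {h : ℝ} {t : ℕ → ℝ} {ψ : ℕ → Vec d → ℝ} {A b c : ℝ} {x₀ : Vec d},
      UniformCoeff Q F μ σ → 0 < h → h ≤ Q → IsStepOrbit F μ σ h t ψ →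
      (∀ k, ∃ M L, HasLipBounds (ψ k) M L) → 0 ≤ A → 0 ≤ b →
      (∀ y, |ψ 0 y - c| ≤ A + b * l2Norm (y - x₀) ^ 2) → ∀ k y,
      |ψ k y - c| ≤ (A + k * h * (b * C + Q * (1 + |c|))) * (1 + C * h) ^ k
        + b * (1 + C * h) ^ k * l2Norm (y - x₀) ^ 2 := by
  obtain ⟨C, hC0, hC⟩ := exists_abs_step_sub_le_of_quadratic d Q
  refine ⟨C, hC0, fun {F μ σ h t ψ A b c x₀} H hh hhQ hψ hlip hA hb h0 k => ?_⟩
  have hQ := H.one_le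
  induction k with
  | zero => simpa using h0
  | succ k ih =>
    intro y
    obtain ⟨M, L, hk⟩ := hlip k
    set E := (1 + C * h) ^ k with hE
    set B := Q * (1 + |c|)
    have hE1 : 1 ≤ E := one_le_pow₀ (le_add_of_nonneg_right (by positivity))
    have hstep := hC (t := t k) H hh hhQ hk.continuous
      (fun z => (hk.abs_le z).trans (le_max_left M |c|)) continuous_const
      (fun _ => le_max_right M |c|) (by positivity) (by positivity) ih y
    have hconst := H.abs_step_const_sub_le (t := t k) hh hhQ c y
    have hslack : 0 ≤ h * (b * C + B) * E * (C * h) + h * B * (E - 1) :=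
      add_nonneg (by positivity) (mul_nonneg (by positivity) (sub_nonneg.2 hE1))
    rw [hψ k]
    refine (abs_sub_le _ (step F μ σ h (t k) (fun _ => c) y) _).trans
      ((add_le_add hstep hconst).trans ?_)
    push_cast
    rw [pow_succ (1 + C * h), ← hE]
    linarith

lemma HasLipBounds.abs_sub_le_quadratic {φ : Vec d → ℝ} {M L ε : ℝ} (H : HasLipBounds φ M L)
    (hε : 0 < ε) (x y : Vec d) :
    |φ y - φ x| ≤ L * ε / 2 + L / (2 * ε) * l2Norm (y - x) ^ 2 := by
  have hL := H.nonneg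
  have hsq : 0 ≤ L / (2 * ε) * (ε - l2Norm (y - x)) ^ 2 := by positivity
  calc |φ y - φ x| ≤ L * l2Norm (y - x) := H.abs_sub_le y x
    _ = L * ε / 2 + L / (2 * ε) * l2Norm (y - x) ^ 2
        - L / (2 * ε) * (ε - l2Norm (y - x)) ^ 2 := by field_simp; ring
    _ ≤ _ := sub_le_self _ hsq

lemma one_add_mul_pow_le_exp {C h Q : ℝ} {k : ℕ} (hC : 0 ≤ C) (hh : 0 ≤ h) (hk : k * h ≤ Q) :
    (1 + C * h) ^ k ≤ exp (C * Q) := by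
  calc (1 + C * h) ^ k ≤ exp (C * h) ^ k := by
        gcongr
        linarith [Real.add_one_le_exp (C * h)]
    _ = exp (C * (k * h)) := by rw [← Real.exp_nat_mul]; ring_nf
    _ ≤ exp (C * Q) := by gcongr

/-- The barrier started from `ψ 0` is optimised by taking its parameter equal to `√(k h)`. -/
lemma exists_abs_stepOrbit_sub_zero_le (d : ℕ) (Q : ℝ) :
    ∃ C ≥ 0, ∀ {F : ℝ → Vec d → ℝ → Vec d → Mat d → ℝ} {μ : ℝ → Vec d → Vec d}
      {σ : ℝ → Vec d → Mat d} {h : ℝ} {t : ℕ → ℝ} {ψ : ℕ → Vec d → ℝ} {M L : ℝ},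
      UniformCoeff Q F μ σ → 0 < h → h ≤ Q → IsStepOrbit F μ σ h t ψ → HasLipBounds (ψ 0) M L →
      ∀ {k : ℕ}, 0 < k → k * h ≤ Q → ∀ x, |ψ k x - ψ 0 x| ≤ C * (1 + M + L) * √(k * h) := by
  obtain ⟨C₁, -, hlip⟩ := exists_stepOrbit_hasLipBounds d Q
  obtain ⟨C, hC0, hC⟩ := exists_abs_stepOrbit_sub_le_of_quadratic d Q
  refine ⟨(1 + C + Q ^ 2) * exp (C * Q), by positivity,
    fun {F μ σ h t ψ M L} H hh hhQ hψ h0 k hk hkQ x => ?_⟩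
  have hQ := H.one_le
  have hL := h0.nonneg
  have hM : 0 ≤ M := (abs_nonneg _).trans (h0.abs_le x)
  have hτ : 0 < k * h := by positivity
  set ε := √(k * h)
  have hε : 0 < ε := Real.sqrt_pos.2 hτ
  have hεsq : ε ^ 2 = k * h := Real.sq_sqrt hτ.le
  have hεQ : ε ≤ Q := Real.sqrt_le_iff.2 ⟨by positivity, hkQ.trans (by nlinarith)⟩
  have hquad := hC H hh hhQ hψ (fun k => ⟨_, _, hlip H hh hhQ hψ h0 k⟩) (by positivity)
    (by positivity) (h0.abs_sub_le_quadratic hε x) k x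
  rw [sub_self, l2Norm_zero, zero_pow two_ne_zero, mul_zero, add_zero, ← hεsq] at hquad
  calc |ψ k x - ψ 0 x|
      ≤ (L * ε / 2 + ε ^ 2 * (L / (2 * ε) * C + Q * (1 + M))) * exp (C * Q) := by
        refine hquad.trans ?_
        gcongr
        · exact h0.abs_le x
        · exact one_add_mul_pow_le_exp hC0 hh.le hkQ
    _ = (L * (1 + C) / 2 + ε * Q * (1 + M)) * exp (C * Q) * ε := by field_simp; ring
    _ ≤ ((1 + C + Q ^ 2) * (1 + M + L)) * exp (C * Q) * ε := by
        have : ε * Q * (1 + M) ≤ Q * Q * (1 + M) := by gcongr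
        have : 0 ≤ (1 + C) * (1 + M + L / 2) + Q ^ 2 * L := by positivity
        gcongr
        linarith
    _ = _ := by ring

lemma exists_abs_stepOrbit_sub_le (d : ℕ) (Q : ℝ) :
    ∃ C ≥ 0, ∀ {F : ℝ → Vec d → ℝ → Vec d → Mat d → ℝ} {μ : ℝ → Vec d → Vec d}
      {σ : ℝ → Vec d → Mat d} {h : ℝ} {t : ℕ → ℝ} {ψ : ℕ → Vec d → ℝ} {M L : ℝ},
      UniformCoeff Q F μ σ → 0 < h → IsStepOrbit F μ σ h t ψ → HasLipBounds (ψ 0) M L →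
      ∀ {m k : ℕ}, (m + k : ℕ) * h ≤ Q → ∀ x,
      |ψ (m + k) x - ψ m x| ≤ C * (2 + M + L) * √(k * h) := by
  obtain ⟨C₁, hC₁0, hlip⟩ := exists_stepOrbit_hasLipBounds d Q
  obtain ⟨C₂, hC₂0, hC₂⟩ := exists_abs_stepOrbit_sub_zero_le d Q
  refine ⟨C₂ * exp (C₁ * Q), by positivity,
    fun {F μ σ h t ψ M L} H hh hψ h0 m k hmk x => ?_⟩
  rcases k.eq_zero_or_pos with rfl | hk
  · simp
  have hM : 0 ≤ M := (abs_nonneg _).trans (h0.abs_le x)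
  have hL := h0.nonneg
  push_cast at hmk
  have hmh : 0 ≤ m * h := by positivity
  have hkh : h ≤ k * h := le_mul_of_one_le_left hh.le (by exact_mod_cast hk)
  have hexp := one_add_mul_pow_le_exp (k := m) (Q := Q) hC₁0 hh.le (by linarith)
  refine (hC₂ H hh (by linarith) (hψ.shift m) (hlip H hh (by linarith) hψ h0 m) hk
    (by linarith) x).trans ?_
  rw [mul_assoc C₂ (exp _)]
  gcongr
  linarith [mul_le_mul_of_nonneg_right hexp (show 0 ≤ 2 + M + L by positivity)]

end Scheme

theorem scheme_time_holder_general
    (d : ℕ) (T : ℝ) (hT : 0 < T)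
    (μ : ℝ → Vec d → Vec d) (σ : ℝ → Vec d → Mat d)
    (hμbdd : ∃ C : ℝ, ∀ s y, ‖μ s y‖ ≤ C)
    (hσbdd : ∃ C : ℝ, ∀ s y, ‖σ s y‖ ≤ C)
    (hμlip : ∃ L : ℝ, ∀ s y y', ‖μ s y - μ s y'‖ ≤ L * ‖y - y'‖)
    (hσlip : ∃ L : ℝ, ∀ s y y', ‖σ s y - σ s y'‖ ≤ L * ‖y - y'‖)
    (hσinv : ∀ s y, IsUnit (σ s y).det)
    (hσinvbdd : ∃ C : ℝ, ∀ s y, ‖(σ s y)⁻¹‖ ≤ C)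
    (F Fr : ℝ → Vec d → ℝ → Vec d → Mat d → ℝ)
    (Fp : ℝ → Vec d → ℝ → Vec d → Mat d → Vec d)
    (Fγ : ℝ → Vec d → ℝ → Vec d → Mat d → Mat d)
    (hF : AssumptionF d σ F Fr Fp Fγ)
    (g : Vec d → ℝ) (hgbdd : ∃ Cg : ℝ, ∀ x, |g x| ≤ Cg)
    (hglip : ∃ Lg : NNReal, LipschitzWith Lg g) :
    ∃ C > (0 : ℝ), ∀ n : ℕ, 0 < n → ∀ i j : ℕ, i ≤ j → j ≤ n → ∀ x : Vec d,
      |vh T F μ σ g n i x - vh T F μ σ g n j x|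
        ≤ C * Real.sqrt (j * (T / n) - i * (T / n)) := by
  obtain ⟨Q, hTQ, hQ⟩ := exists_uniformCoeff hT.le hμbdd hσbdd hμlip hσlip hσinv hσinvbdd hF
  obtain ⟨C, hC0, hC⟩ := exists_abs_stepOrbit_sub_le d Q
  obtain ⟨M, hM⟩ := hgbdd
  obtain ⟨L, hL⟩ := hglip
  have hg : HasLipBounds g M L := ⟨L.2, hM, fun x y =>
    (hL.dist_le_mul x y).trans (mul_le_mul_of_nonneg_left (norm_le_l2Norm _) L.2)⟩
  have hM0 : 0 ≤ M := (abs_nonneg _).trans (hM 0)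
  refine ⟨C * (2 + M + L) + 1, by positivity, fun n hn i j hij hj x => ?_⟩
  have hh : 0 < T / n := by positivity
  have horbit : IsStepOrbit F μ σ (T / n) (fun k => T - (k + 1) * (T / n))
    (schemeAux T F μ σ g n) := fun k => rfl
  have hi : n - j + (j - i) = n - i := by omega
  have htime : ((n - j + (j - i) : ℕ) : ℝ) * (T / n) ≤ Q := by
    refine le_trans ?_ hTQ
    rw [hi, mul_div_left_comm]
    exact mul_le_of_le_one_right hT.le (div_le_one_of_le₀ (by simp) n.cast_nonneg)
  have hholder := hC hQ hh horbit hg htime x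
  rw [hi, Nat.cast_sub hij, sub_mul] at hholder
  exact hholder.trans (mul_le_mul_of_nonneg_right (by linarith) (Real.sqrt_nonneg _))

/-- Uniform 1/2-Hölder continuity in time of the discrete-time approximations
(Corollary 3.21 of the paper): `|v^h(t_i,x) − v^h(t_j,x)| ≤ C (t_j − t_i)^{1/2}`
with `C` independent of `n`. -/
theorem scheme_time_holder
    (d : ℕ) (T : ℝ) (hT : 0 < T)
    (μ : ℝ → Vec d → Vec d) (σ : ℝ → Vec d → Mat d)
    (hμbdd : ∃ C : ℝ, ∀ s y, ‖μ s y‖ ≤ C)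
    (hσbdd : ∃ C : ℝ, ∀ s y, ‖σ s y‖ ≤ C)
    (hμreg : ∃ L : ℝ, ∀ s s' : ℝ, ∀ y y' : Vec d,
      ‖μ s y - μ s' y'‖ ≤ L * (‖y - y'‖ + Real.sqrt |s - s'|))
    (hσreg : ∃ L : ℝ, ∀ s s' : ℝ, ∀ y y' : Vec d,
      ‖σ s y - σ s' y'‖ ≤ L * (‖y - y'‖ + Real.sqrt |s - s'|))
    (hσinv : ∀ s y, IsUnit (σ s y).det)
    (hσinvbdd : ∃ C : ℝ, ∀ s y, ‖(σ s y)⁻¹‖ ≤ C)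
    (F Fr : ℝ → Vec d → ℝ → Vec d → Mat d → ℝ)
    (Fp : ℝ → Vec d → ℝ → Vec d → Mat d → Vec d)
    (Fγ : ℝ → Vec d → ℝ → Vec d → Mat d → Mat d)
    (hF : AssumptionF d σ F Fr Fp Fγ)
    (g : Vec d → ℝ) (hgbdd : ∃ Cg : ℝ, ∀ x, |g x| ≤ Cg)
    (hglip : ∃ Lg : NNReal, LipschitzWith Lg g) :
    ∃ C > (0 : ℝ), ∀ n : ℕ, 0 < n → ∀ i j : ℕ, i ≤ j → j ≤ n → ∀ x : Vec d,
      |vh T F μ σ g n i x - vh T F μ σ g n j x|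
        ≤ C * Real.sqrt (j * (T / n) - i * (T / n)) :=
  scheme_time_holder_general d T hT μ σ hμbdd hσbdd
    (hμreg.imp fun _ hL s y y' => by simpa using hL s s y y')
    (hσreg.imp fun _ hL s y y' => by simpa using hL s s y y')
    hσinv hσinvbdd F Fr Fp Fγ hF g hgbdd hglip

end
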